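/- arXiv:2311.09203 — 4 statements merged into one kernel-verified Lean document; each statement's English description precedes it below -/
import Mathlib

section
/- Let 0<α<1 and β:=1/α. There exist constants c₇>0 and r₀>0 depending only on β such that for all 0<r<r₀, all ρ∈ℝ, and all reals t,θ with |t| ≤ r^{1+3β/7} and r^{3β/7} < |θ| ≤ π, one has |Q(e^{−(r+it)}, e^{ρ+iθ})| / Q(e^{−r}, e^ρ) ≤ exp(−c₇·(e^ρ/(1+e^ρ)²)·r^{−β/7}). -/
open Real

/-- `g α k` is the number of positive integers `n` with `⌊n^α⌋ = k`. -/
noncomputable def g (α : ℝ) (k : ℕ) : ℕ :=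
  Set.ncard {n : ℕ | 1 ≤ n ∧ ⌊(n : ℝ) ^ α⌋ = (k : ℤ)}

/-- `Q(z,u) = ∏_{k≥1} (1 + u z^k)^{g(k)}` -/
noncomputable def Q (α : ℝ) (z u : ℂ) : ℂ :=
  ∏' k : ℕ, (1 + u * z ^ (k + 1)) ^ g α (k + 1)

/-!
Grouping the positive integers by the value of `⌊n ^ α⌋` turns `Q` into the product of
`1 + u * z ^ ⌊n ^ α⌋` over all `n ≥ 1`. For `u = e ^ (ρ + iθ)` and `z = e ^ (-(r + it))` the factor
of exponent `k` is `1 + x * e ^ (iφ)` with `x = e ^ (ρ - r * k)` and `φ = θ - t * k`; its modulus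
is at most `exp (-x * (1 - cos φ) / (1 + x) ^ 2) * (1 + x)`, so no factor exceeds its value `1 + x`
at `t = θ = 0`. If `|t| ≤ r * |θ|` and `k ≤ 1 / (2 * r)`, then `φ` stays within
`|θ| / 2` of `θ` and `x` is comparable with `e ^ ρ`, so the gain is uniform in `k`. About
`(1 / (2 * r)) ^ (1 / α)` integers `n` have `⌊n ^ α⌋ ≤ 1 / (2 * r)`, and their gains multiply up to
the claimed exponential.
-/

open Filter

section InfiniteProducts

theorem hasProd_pow_ncard_preimage {ι κ M : Type*} [CommMonoid M] [TopologicalSpace M]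
    [ContinuousMul M] [RegularSpace M] {f : κ → M} {p : ι → κ} {a : M}
    (hfin : ∀ k, (p ⁻¹' {k}).Finite) (h : HasProd (fun i ↦ f (p i)) a) :
    HasProd (fun k ↦ f k ^ (p ⁻¹' {k}).ncard) a := by
  refine ((Equiv.sigmaFiberEquiv p).hasProd_iff.mpr h).sigma fun k ↦ ?_
  have : Fintype {i // p i = k} := (hfin k).fintype
  have hfiber : ∏ i : {i // p i = k}, f (p i) = f k ^ (p ⁻¹' {k}).ncard := by
    rw [Finset.prod_congr rfl fun i _ ↦ congrArg f i.2, Finset.prod_const, Finset.card_univ,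
      ← Nat.card_eq_fintype_card]
    rfl
  exact hfiber ▸ hasProd_fintype fun i : {i // p i = k} ↦ f (p i)

theorem norm_le_pow_card_mul_norm_of_hasProd {ι K : Type*} [NormedField K] {f F : ι → K} {a b : K}
    {c : ℝ} {s : Finset ι} (hf : HasProd f a) (hF : HasProd F b) (hle : ∀ i, ‖f i‖ ≤ ‖F i‖)
    (hles : ∀ i ∈ s, ‖f i‖ ≤ c * ‖F i‖) : ‖a‖ ≤ c ^ s.card * ‖b‖ := by
  classical
  have hc : HasProd (fun i ↦ if i ∈ s then c else 1) (c ^ s.card) := by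
    have := hasProd_prod_of_ne_finset_one (f := fun i ↦ if i ∈ s then c else 1) (s := s)
      (L := .unconditional ι) fun i hi ↦ if_neg hi
    simpa [Finset.prod_ite_mem] using this
  refine le_of_tendsto_of_tendsto hf.norm (hc.mul hF.norm) (Eventually.of_forall fun t ↦ ?_)
  refine Finset.prod_le_prod (fun i _ ↦ norm_nonneg _) fun i _ ↦ ?_
  split_ifs with hi
  · exact hles i hi
  · simpa using hle i

end InfiniteProducts

section PartSize

variable {α : ℝ}

/-- The sequence `⌊m ^ α⌋`, `m ≥ 1`, indexed from zero by `n = m - 1`. It lists, with multiplicity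
`g α k`, the parts `k` available to the partitions that `Q` enumerates. -/
noncomputable def partSize (α : ℝ) (n : ℕ) : ℕ :=
  ⌊((n + 1 : ℕ) : ℝ) ^ α⌋₊

theorem one_le_partSize (hα : 0 ≤ α) (n : ℕ) : 1 ≤ partSize α n :=
  Nat.one_le_floor_iff _ |>.mpr <| one_le_rpow (by norm_cast; omega) hα

theorem tendsto_partSize_atTop (hα : 0 < α) : Tendsto (partSize α) atTop atTop :=
  tendsto_nat_floor_atTop.comp <| (tendsto_rpow_atTop hα).comp <|
    tendsto_natCast_atTop_atTop.comp (tendsto_add_atTop_nat 1)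

theorem finite_partSize_preimage (hα : 0 < α) (k : ℕ) : (partSize α ⁻¹' {k}).Finite := by
  have h := tendsto_partSize_atTop hα
  rw [← Nat.cofinite_eq_atTop] at h
  simpa using h (Set.finite_singleton k).compl_mem_cofinite

theorem ncard_partSize_preimage (α : ℝ) (k : ℕ) : (partSize α ⁻¹' {k}).ncard = g α k := by
  rw [g, ← Set.ncard_image_of_injective _ Nat.succ_injective]
  congr 1
  ext m
  cases m <;>
    simp [partSize, ← Int.natCast_floor_eq_floor (rpow_nonneg (Nat.cast_nonneg _) α)]

theorem partSize_le_of_lt_floor (hα : 0 < α) {y : ℝ} (hy : 0 ≤ y) {n : ℕ}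
    (hn : n < ⌊y ^ α⁻¹⌋₊) : (partSize α n : ℝ) ≤ y := by
  have hroot : ((n + 1 : ℕ) : ℝ) ≤ y ^ α⁻¹ := (Nat.le_floor_iff (by positivity)).mp hn
  exact (Nat.floor_le (by positivity)).trans
    ((le_rpow_inv_iff_of_pos (by positivity) hy hα).mp hroot)

theorem sq_le_two_mul_partSize_pow (hα : 0 < α) (n : ℕ) :
    ((n + 1 : ℕ) : ℝ) ^ 2 ≤ (2 * partSize α n : ℝ) ^ ⌈2 / α⌉₊ := by
  have hn : (1 : ℝ) ≤ (n + 1 : ℕ) := by norm_cast; omega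
  have hexp : 2 ≤ α * ⌈2 / α⌉₊ := by
    rw [← div_le_iff₀' hα]
    exact Nat.le_ceil _
  have hpart : ((n + 1 : ℕ) : ℝ) ^ α ≤ 2 * partSize α n := by
    rw [← div_le_iff₀' two_pos]
    exact (Nat.div_two_lt_floor (one_le_rpow hn hα.le)).le
  calc ((n + 1 : ℕ) : ℝ) ^ 2 = ((n + 1 : ℕ) : ℝ) ^ (2 : ℝ) := (rpow_two _).symm
    _ ≤ ((n + 1 : ℕ) : ℝ) ^ (α * ⌈2 / α⌉₊) := rpow_le_rpow_of_exponent_le hn hexp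
    _ = (((n + 1 : ℕ) : ℝ) ^ α) ^ ⌈2 / α⌉₊ := rpow_mul_natCast (by positivity) _ _
    _ ≤ (2 * partSize α n : ℝ) ^ ⌈2 / α⌉₊ := by gcongr

theorem summable_pow_partSize (hα : 0 < α) {x : ℝ} (hx₀ : 0 ≤ x) (hx₁ : x < 1) :
    Summable fun n ↦ x ^ partSize α n := by
  set m := ⌈2 / α⌉₊
  have hsum : Summable fun n : ℕ ↦ 1 / ((n + 1 : ℕ) : ℝ) ^ 2 :=
    (summable_nat_add_iff 1).mpr (summable_one_div_nat_pow.mpr one_lt_two)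
  have hdecay : ∀ᶠ n in atTop, (partSize α n : ℝ) ^ m * x ^ partSize α n ≤ 1 :=
    ((tendsto_pow_const_mul_const_pow_of_lt_one m hx₀ hx₁).comp
      (tendsto_partSize_atTop hα)).eventually_le_const one_pos
  refine summable_of_isBigO_nat hsum (Asymptotics.IsBigO.of_bound (2 ^ m) ?_)
  filter_upwards [hdecay] with n hn
  rw [norm_of_nonneg (by positivity), norm_of_nonneg (by positivity), mul_one_div,
    le_div_iff₀ (by positivity)]
  calc x ^ partSize α n * ((n + 1 : ℕ) : ℝ) ^ 2
      ≤ x ^ partSize α n * (2 * partSize α n : ℝ) ^ m := by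
        gcongr
        exact sq_le_two_mul_partSize_pow hα n
    _ = 2 ^ m * ((partSize α n : ℝ) ^ m * x ^ partSize α n) := by ring
    _ ≤ 2 ^ m := mul_le_of_le_one_right (by positivity) hn

theorem hasProd_Q (hα : 0 < α) {z : ℂ} (hz : ‖z‖ < 1) (u : ℂ) :
    HasProd (fun n ↦ 1 + u * z ^ partSize α n) (Q α z u) := by
  have hmul : Multipliable fun n ↦ 1 + u * z ^ partSize α n := by
    refine multipliable_one_add_of_summable ?_
    simpa only [norm_mul, norm_pow] using
      (summable_pow_partSize hα (norm_nonneg z) hz).mul_left ‖u‖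
  have hfiber := hasProd_pow_ncard_preimage (f := fun k ↦ 1 + u * z ^ k)
    (finite_partSize_preimage hα) hmul.hasProd
  simp only [ncard_partSize_preimage] at hfiber
  have hg₀ : g α 0 = 0 := by
    rw [← ncard_partSize_preimage, Set.ncard_eq_zero (finite_partSize_preimage hα 0)]
    exact Set.eq_empty_of_forall_notMem fun n hn ↦
      (Nat.one_le_iff_ne_zero.mp (one_le_partSize hα.le n)) hn
  have hshift := (Nat.succ_injective.hasProd_iff fun k hk ↦ ?_).mpr hfiber
  · have hQ : Q α z u = ∏' n, (1 + u * z ^ partSize α n) := hshift.tprod_eq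
    exact hQ ▸ hmul.hasProd
  · obtain rfl : k = 0 := by
      by_contra hk₀
      exact hk ⟨k - 1, Nat.succ_pred hk₀⟩
    simp [hg₀]

end PartSize

section FactorBounds

theorem norm_one_add_mul_exp_le {x : ℝ} (hx : 0 ≤ x) (φ : ℝ) :
    ‖1 + (x : ℂ) * Complex.exp (φ * Complex.I)‖ ≤
      exp (-(x / (1 + x) ^ 2 * (1 - cos φ))) * (1 + x) := by
  have hsq : ‖1 + (x : ℂ) * Complex.exp (φ * Complex.I)‖ ^ 2 =
      (-(2 * (x / (1 + x) ^ 2 * (1 - cos φ))) + 1) * (1 + x) ^ 2 := by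
    rw [← Complex.normSq_eq_norm_sq, Complex.normSq_apply]
    simp only [Complex.add_re, Complex.one_re, Complex.mul_re, Complex.ofReal_re,
      Complex.ofReal_im, Complex.add_im, Complex.one_im, Complex.mul_im,
      Complex.exp_ofReal_mul_I_re, Complex.exp_ofReal_mul_I_im]
    field_simp
    linear_combination x ^ 2 * sin_sq_add_cos_sq φ
  refine le_of_sq_le_sq ?_ (by positivity)
  rw [hsq, mul_pow, ← exp_nat_mul, Nat.cast_ofNat, mul_neg]
  gcongr
  exact add_one_le_exp _

theorem sq_div_le_one_sub_cos {θ φ : ℝ} (hθ : |θ| ≤ π) (hφ : |θ - φ| ≤ |θ| / 2) :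
    θ ^ 2 / (2 * π ^ 2) ≤ 1 - cos φ := by
  have hlower : |θ| / 2 ≤ |φ| := by linarith [abs_sub_abs_le_abs_sub θ φ]
  have hupper : |φ| ≤ π + π / 2 := by
    linarith [abs_sub_abs_le_abs_sub φ θ, abs_sub_comm φ θ]
  rcases le_total |φ| π with hπ | hπ
  · calc θ ^ 2 / (2 * π ^ 2) = 2 / π ^ 2 * (|θ| / 2) ^ 2 := by
          rw [div_pow, sq_abs]
          field_simp
      _ ≤ 2 / π ^ 2 * |φ| ^ 2 := by gcongr
      _ = 2 / π ^ 2 * φ ^ 2 := by rw [sq_abs]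
      _ ≤ 1 - cos φ := by linarith [cos_le_one_sub_mul_cos_sq hπ]
  · have hcos : cos φ ≤ 0 := by
      rw [← cos_abs]
      exact cos_nonpos_of_pi_div_two_le_of_le (by linarith [pi_pos]) hupper
    calc θ ^ 2 / (2 * π ^ 2) ≤ 1 := by
          rw [div_le_one (by positivity), ← sq_abs]
          nlinarith [abs_nonneg θ]
      _ ≤ 1 - cos φ := by linarith

theorem mul_div_one_add_sq_le {c y : ℝ} (hc₀ : 0 ≤ c) (hc₁ : c ≤ 1) (hy : 0 ≤ y) :
    c * (y / (1 + y) ^ 2) ≤ c * y / (1 + c * y) ^ 2 := by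
  rw [← mul_div_assoc]
  gcongr
  exact mul_le_of_le_one_left hy hc₁

theorem exp_mul_exp_pow_eq (r ρ t θ : ℝ) (k : ℕ) :
    Complex.exp (ρ + θ * Complex.I) * Complex.exp (-r - t * Complex.I) ^ k =
      (exp (ρ - r * k) : ℝ) * Complex.exp ((θ - t * k : ℝ) * Complex.I) := by
  rw [← Complex.exp_nat_mul, Complex.ofReal_exp, ← Complex.exp_add, ← Complex.exp_add]
  congr 1
  push_cast
  ring

theorem norm_one_add_exp_mul_exp_pow_eq (r ρ : ℝ) (k : ℕ) :
    ‖1 + Complex.exp ρ * Complex.exp (-r) ^ k‖ = 1 + exp (ρ - r * k) := by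
  have h := exp_mul_exp_pow_eq r ρ 0 0 k
  simp only [Complex.ofReal_zero, zero_mul, add_zero, sub_zero, Complex.exp_zero, mul_one] at h
  rw [h]
  exact_mod_cast norm_of_nonneg (by positivity)

theorem norm_one_add_exp_mul_exp_pow_le (r ρ t θ : ℝ) (k : ℕ) :
    ‖1 + Complex.exp (ρ + θ * Complex.I) * Complex.exp (-r - t * Complex.I) ^ k‖ ≤
      ‖1 + Complex.exp ρ * Complex.exp (-r) ^ k‖ := by
  rw [norm_one_add_exp_mul_exp_pow_eq, exp_mul_exp_pow_eq]
  refine (norm_add_le _ _).trans_eq ?_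
  rw [norm_one, norm_mul, Complex.norm_exp_ofReal_mul_I, mul_one, Complex.norm_of_nonneg]
  positivity

theorem norm_one_add_exp_mul_exp_pow_le_exp_mul {r t θ : ℝ} {k : ℕ} (ρ : ℝ) (hr : 0 ≤ r)
    (ht : |t| ≤ r * |θ|) (hθ : |θ| ≤ π) (hk : r * k ≤ 1 / 2) :
    ‖1 + Complex.exp (ρ + θ * Complex.I) * Complex.exp (-r - t * Complex.I) ^ k‖ ≤
      exp (-(exp (-1 / 2) * (exp ρ / (1 + exp ρ) ^ 2) * (θ ^ 2 / (2 * π ^ 2)))) *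
        ‖1 + Complex.exp ρ * Complex.exp (-r) ^ k‖ := by
  have hphase : |θ - (θ - t * k)| ≤ |θ| / 2 :=
    calc |θ - (θ - t * k)| = |t| * k := by rw [sub_sub_cancel, abs_mul, Nat.abs_cast]
      _ ≤ r * |θ| * k := by gcongr
      _ = |θ| * (r * k) := by ring
      _ ≤ |θ| * (1 / 2) := by gcongr
      _ = |θ| / 2 := by ring
  have hmodulus : exp (-1 / 2) * (exp ρ / (1 + exp ρ) ^ 2) ≤
      exp (ρ - r * k) / (1 + exp (ρ - r * k)) ^ 2 :=
    calc exp (-1 / 2) * (exp ρ / (1 + exp ρ) ^ 2)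
        ≤ exp (-(r * k)) * (exp ρ / (1 + exp ρ) ^ 2) := by
          gcongr
          linarith
      _ ≤ exp (-(r * k)) * exp ρ / (1 + exp (-(r * k)) * exp ρ) ^ 2 :=
          mul_div_one_add_sq_le (exp_nonneg _) (exp_le_one_iff.mpr (by simpa using by positivity))
            (exp_nonneg _)
      _ = exp (ρ - r * k) / (1 + exp (ρ - r * k)) ^ 2 := by
          rw [← exp_add, neg_add_eq_sub]
  rw [norm_one_add_exp_mul_exp_pow_eq, exp_mul_exp_pow_eq]
  refine (norm_one_add_mul_exp_le (exp_nonneg _) _).trans ?_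
  gcongr
  exact sq_div_le_one_sub_cos hθ hphase

end FactorBounds

section QBounds

theorem norm_Q_le_exp_pow_floor_mul {α r t θ : ℝ} (hα : 0 < α) (ρ : ℝ) (hr : 0 < r)
    (ht : |t| ≤ r * |θ|) (hθ : |θ| ≤ π) :
    ‖Q α (Complex.exp (-r - t * Complex.I)) (Complex.exp (ρ + θ * Complex.I))‖ ≤
      exp (-(exp (-1 / 2) * (exp ρ / (1 + exp ρ) ^ 2) * (θ ^ 2 / (2 * π ^ 2)))) ^
          ⌊(1 / (2 * r)) ^ α⁻¹⌋₊ *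
        ‖Q α (Complex.exp (-r)) (Complex.exp ρ)‖ := by
  have hz : ‖Complex.exp (-r - t * Complex.I)‖ < 1 := by simpa [Complex.norm_exp] using hr
  have hz₀ : ‖Complex.exp (-r)‖ < 1 := by simpa [Complex.norm_exp] using hr
  have h := norm_le_pow_card_mul_norm_of_hasProd
    (s := Finset.range ⌊(1 / (2 * r)) ^ α⁻¹⌋₊) (hasProd_Q hα hz _) (hasProd_Q hα hz₀ _)
    (fun n ↦ norm_one_add_exp_mul_exp_pow_le r ρ t θ (partSize α n))
    fun n hn ↦ norm_one_add_exp_mul_exp_pow_le_exp_mul ρ hr.le ht hθ ?_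
  · simpa only [Finset.card_range] using h
  · have hpart := partSize_le_of_lt_floor hα (by positivity) (Finset.mem_range.mp hn)
    rw [le_div_iff₀ (by positivity)] at hpart
    linarith

theorem rpow_neg_le_floor_rpow {r β : ℝ} (hβ : 0 ≤ β) (hr₀ : 0 < r) (hr : r ≤ 1 / 2) :
    (1 / 2) ^ β / 2 * r ^ (-β) ≤ ⌊(1 / (2 * r)) ^ β⌋₊ := by
  have hbase : 1 ≤ 1 / (2 * r) := by
    rw [le_div_iff₀ (by positivity)]
    linarith
  calc (1 / 2) ^ β / 2 * r ^ (-β) = (1 / (2 * r)) ^ β / 2 := by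
        rw [← div_div, div_rpow (by norm_num) hr₀.le, rpow_neg hr₀.le]
        ring
    _ ≤ ⌊(1 / (2 * r)) ^ β⌋₊ := (Nat.div_two_lt_floor (one_le_rpow hbase hβ)).le

theorem exists_norm_Q_div_le {α : ℝ} (hα : 0 < α) :
    ∃ c > (0 : ℝ), ∀ r : ℝ, 0 < r → r ≤ 1 / 2 → ∀ ρ t θ : ℝ, |t| ≤ r * |θ| → |θ| ≤ π →
      ‖Q α (Complex.exp (-r - t * Complex.I)) (Complex.exp (ρ + θ * Complex.I))‖ /
          ‖Q α (Complex.exp (-r)) (Complex.exp ρ)‖ ≤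
        exp (-c * (exp ρ / (1 + exp ρ) ^ 2) * (θ ^ 2 * r ^ (-α⁻¹))) := by
  refine ⟨exp (-1 / 2) * (1 / (2 * π ^ 2)) * ((1 / 2) ^ α⁻¹ / 2), by positivity,
    fun r hr₀ hr ρ t θ ht hθ ↦ ?_⟩
  have hQ := norm_Q_le_exp_pow_floor_mul hα ρ hr₀ ht hθ
  have hfloor := rpow_neg_le_floor_rpow (inv_nonneg.mpr hα.le) hr₀ hr
  refine div_le_of_le_mul₀ (norm_nonneg _) (exp_nonneg _) (hQ.trans ?_)
  rw [← exp_nat_mul]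
  refine mul_le_mul_of_nonneg_right (exp_le_exp.mpr ?_) (norm_nonneg _)
  set gain := exp (-1 / 2) * (exp ρ / (1 + exp ρ) ^ 2) * (θ ^ 2 / (2 * π ^ 2)) with hgain
  calc ⌊(1 / (2 * r)) ^ α⁻¹⌋₊ * -gain = -(gain * ⌊(1 / (2 * r)) ^ α⁻¹⌋₊) := by ring
    _ ≤ -(gain * ((1 / 2) ^ α⁻¹ / 2 * r ^ (-α⁻¹))) := by gcongr
    _ = _ := by
      rw [hgain]
      ring

end QBounds

theorem Q_ratio_bound_small_t_general (α β : ℝ) (hα : 0 < α) (hβ : β = 1 / α) :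
    ∃ c₇ > (0 : ℝ), ∃ r₀ > (0 : ℝ), ∀ r : ℝ, 0 < r → r < r₀ → ∀ ρ t θ : ℝ,
      |t| ≤ r ^ (1 + 3 * β / 7) → r ^ (3 * β / 7) < |θ| → |θ| ≤ π →
      ‖Q α (Complex.exp (-(r : ℂ) - (t : ℂ) * Complex.I))
          (Complex.exp ((ρ : ℂ) + (θ : ℂ) * Complex.I))‖
        / ‖Q α (Complex.exp (-(r : ℂ))) (Complex.exp (ρ : ℂ))‖
      ≤ exp (-c₇ * (exp ρ / (1 + exp ρ) ^ 2) * r ^ (-β / 7)) := by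
  obtain ⟨c, hc, hQ⟩ := exists_norm_Q_div_le hα
  refine ⟨c, hc, 1 / 2, one_half_pos, fun r hr₀ hr ρ t θ ht hθ hθπ ↦ ?_⟩
  have htθ : |t| ≤ r * |θ| :=
    calc |t| ≤ r * r ^ (3 * β / 7) := by rwa [rpow_add hr₀, rpow_one] at ht
      _ ≤ r * |θ| := by gcongr
  have hpow : r ^ (-β / 7) ≤ θ ^ 2 * r ^ (-α⁻¹) :=
    calc r ^ (-β / 7) = (r ^ (3 * β / 7)) ^ 2 * r ^ (-α⁻¹) := by
          rw [← rpow_mul_natCast hr₀.le, ← rpow_add hr₀, hβ, one_div]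
          congr 1
          push_cast
          ring
      _ ≤ |θ| ^ 2 * r ^ (-α⁻¹) := by gcongr
      _ = θ ^ 2 * r ^ (-α⁻¹) := by rw [sq_abs]
  refine (hQ r hr₀ hr.le ρ t θ htθ hθπ).trans (exp_le_exp.mpr ?_)
  simp only [neg_mul]
  gcongr

/-- Lemma (estimate for small `|t|`, large `|θ|`): for `r` small, `|t| ≤ r^{1+3β/7}`,
`r^{3β/7} < |θ| ≤ π`, one has
`|Q(e^{−(r+it)}, e^{ρ+iθ})|/Q(e^{−r}, e^ρ) ≤ exp(−c₇·(e^ρ/(1+e^ρ)²)·r^{−β/7})`. -/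
theorem Q_ratio_bound_small_t (α β : ℝ) (hα : 0 < α ∧ α < 1) (hβ : β = 1 / α) :
    ∃ c₇ > (0:ℝ), ∃ r₀ > (0:ℝ), ∀ r : ℝ, 0 < r → r < r₀ → ∀ ρ t θ : ℝ,
      |t| ≤ r ^ (1 + 3 * β / 7) → r ^ (3 * β / 7) < |θ| → |θ| ≤ π →
      ‖Q α (Complex.exp (-(r : ℂ) - (t : ℂ) * Complex.I))
          (Complex.exp ((ρ : ℂ) + (θ : ℂ) * Complex.I))‖
        / ‖Q α (Complex.exp (-(r : ℂ))) (Complex.exp (ρ : ℂ))‖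
      ≤ Real.exp (-c₇ * (Real.exp ρ / (1 + Real.exp ρ) ^ 2) * r ^ (-β / 7)) :=
  Q_ratio_bound_small_t_general α β hα.1 hβ
end

section
/- Let 0<α<1 and β:=1/α. For all r>0 and all reals ρ, t, θ one has (|Q(e^{−(r+it)}, e^{ρ+iθ})| / Q(e^{−r}, e^ρ))² ≤ exp(−(2e^ρ/(1+e^ρ)²)·∑_{k≥1} g(k)·e^{−kr}·(1 − cos(θ − kt))). -/
open Real

/-!
Since `‖1 + w‖² = (1 + ‖w‖)² - 2 (‖w‖ - Re w)`, the inequality `1 - s ≤ exp (-s)` gives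
`‖1 + w‖² ≤ (1 + ‖w‖)² exp (-2 (‖w‖ - Re w) / (1 + ‖w‖)²)`. For the factors `w = u z ^ k` of
`Q α z u` one has `‖w‖ ≤ ‖u‖`, so the denominator can be replaced by the constant `(1 + ‖u‖)²`, and
the exponentials multiply up to the exponential of a single series.
-/

section OneAddPow

variable {ι : Type*} {m : ι → ℕ}

lemma multipliable_one_add_pow {R : Type*} [NormedCommRing R] [NormOneClass R] [CompleteSpace R]
    {w : ι → R} (hw : Summable fun i ↦ (m i : ℝ) * ‖w i‖) :
    Multipliable fun i ↦ (1 + w i) ^ m i := by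
  -- Repeat the factor `1 + w i` over the `m i` points of the fibre above `i`.
  have hsigma : Summable fun p : Σ i, Fin (m i) ↦ ‖w p.1‖ := by
    rw [summable_sigma_of_nonneg fun p ↦ norm_nonneg _]
    exact ⟨fun i ↦ (hasSum_fintype _).summable, by simpa using hw⟩
  have hfibre (i : ι) : HasProd (fun _ : Fin (m i) ↦ 1 + w i) ((1 + w i) ^ m i) := by
    simpa using hasProd_fintype fun _ : Fin (m i) ↦ 1 + w i
  exact ((multipliable_one_add_of_summable hsigma).hasProd.sigma hfibre).multipliable

lemma norm_one_add_sq (w : ℂ) : ‖1 + w‖ ^ 2 = (1 + ‖w‖) ^ 2 - 2 * (‖w‖ - w.re) := by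
  have hinner : inner ℝ 1 w = w.re := by simp [Complex.inner]
  rw [norm_add_sq_real, hinner, norm_one]
  ring

lemma norm_one_add_sq_le_mul_exp {w : ℂ} {c : ℝ} (hw : ‖w‖ ≤ c) :
    ‖1 + w‖ ^ 2 ≤ (1 + ‖w‖) ^ 2 * Real.exp (-(2 / (1 + c) ^ 2) * (‖w‖ - w.re)) := by
  have hre : 0 ≤ ‖w‖ - w.re := sub_nonneg.mpr (Complex.re_le_norm w)
  calc ‖1 + w‖ ^ 2
      = (1 + ‖w‖) ^ 2 * (-(2 / (1 + ‖w‖) ^ 2 * (‖w‖ - w.re)) + 1) := by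
        rw [norm_one_add_sq]
        field_simp
        ring
    _ ≤ (1 + ‖w‖) ^ 2 * Real.exp (-(2 / (1 + ‖w‖) ^ 2 * (‖w‖ - w.re))) := by
        gcongr
        exact Real.add_one_le_exp _
    _ ≤ (1 + ‖w‖) ^ 2 * Real.exp (-(2 / (1 + c) ^ 2) * (‖w‖ - w.re)) := by
        rw [neg_mul]
        gcongr

lemma norm_tprod_one_add_pow_sq_le {w : ι → ℂ} {c : ℝ} (hwc : ∀ i, ‖w i‖ ≤ c)
    (hw : Summable fun i ↦ (m i : ℝ) * ‖w i‖) :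
    ‖∏' i, (1 + w i) ^ m i‖ ^ 2 ≤ ‖∏' i, (1 + (‖w i‖ : ℂ)) ^ m i‖ ^ 2 *
      Real.exp (-(2 / (1 + c) ^ 2) * ∑' i, m i * (‖w i‖ - (w i).re)) := by
  have hre : Summable fun i ↦ (m i : ℝ) * (w i).re := by
    refine .of_norm_bounded hw fun i ↦ ?_
    rw [norm_mul, RCLike.norm_natCast]
    gcongr
    exact Complex.abs_re_le_norm _
  have hsum : Summable fun i ↦ (m i : ℝ) * (‖w i‖ - (w i).re) := by
    simpa only [mul_sub] using hw.sub hre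
  have hw_norm : Summable fun i ↦ (m i : ℝ) * ‖(‖w i‖ : ℂ)‖ := by
    simpa only [Complex.norm_real, norm_norm] using hw
  have hlhs := (multipliable_one_add_pow hw).hasProd.norm.pow 2
  have hrhs := ((multipliable_one_add_pow hw_norm).hasProd.norm.pow 2).mul
    (hsum.hasSum.mul_left (-(2 / (1 + c) ^ 2))).rexp
  refine le_of_tendsto_of_tendsto' hlhs hrhs fun s ↦
    Finset.prod_le_prod (fun i _ ↦ by positivity) fun i _ ↦ ?_
  have hnorm : ‖1 + (‖w i‖ : ℂ)‖ = 1 + ‖w i‖ := by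
    exact_mod_cast Complex.norm_of_nonneg (by positivity : 0 ≤ 1 + ‖w i‖)
  calc ‖(1 + w i) ^ m i‖ ^ 2
      = (‖1 + w i‖ ^ 2) ^ m i := by rw [norm_pow, pow_right_comm]
    _ ≤ ((1 + ‖w i‖) ^ 2 * Real.exp (-(2 / (1 + c) ^ 2) * (‖w i‖ - (w i).re))) ^ m i := by
        gcongr
        exact norm_one_add_sq_le_mul_exp (hwc i)
    _ = ‖(1 + (‖w i‖ : ℂ)) ^ m i‖ ^ 2 *
          Real.exp (-(2 / (1 + c) ^ 2) * (m i * (‖w i‖ - (w i).re))) := by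
        rw [mul_pow, ← Real.exp_nat_mul, norm_pow, hnorm, pow_right_comm, mul_left_comm]

end OneAddPow

section Multiplicity

open Asymptotics Filter

variable {α : ℝ}

lemma g_zero (hα : 0 ≤ α) : g α 0 = 0 := by
  have hempty : {n : ℕ | 1 ≤ n ∧ ⌊(n : ℝ) ^ α⌋ = ((0 : ℕ) : ℤ)} = ∅ := by
    refine Set.eq_empty_of_forall_notMem fun n ⟨hn, hfloor⟩ ↦ ?_
    have hlt : (n : ℝ) ^ α < 1 := (Int.floor_eq_zero_iff.mp hfloor).2
    exact hlt.not_ge (Real.one_le_rpow (mod_cast hn) hα)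
  rw [g, hempty, Set.ncard_empty]

lemma g_le_rpow (hα : 0 < α) (k : ℕ) : (g α k : ℝ) ≤ ((k : ℝ) + 1) ^ α⁻¹ := by
  have hsub : {n : ℕ | 1 ≤ n ∧ ⌊(n : ℝ) ^ α⌋ = (k : ℤ)} ⊆
      Finset.Icc 1 ⌊((k : ℝ) + 1) ^ α⁻¹⌋₊ := by
    rintro n ⟨hn, hfloor⟩
    have hlt : (n : ℝ) ^ α < k + 1 := by simpa [hfloor] using Int.lt_floor_add_one ((n : ℝ) ^ α)
    have hle : (n : ℝ) ≤ ((k : ℝ) + 1) ^ α⁻¹ :=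
      (Real.le_rpow_inv_iff_of_pos n.cast_nonneg (by positivity) hα).mpr hlt.le
    exact Finset.mem_coe.mpr (Finset.mem_Icc.mpr ⟨hn, Nat.le_floor hle⟩)
  have hcard : g α k ≤ ⌊((k : ℝ) + 1) ^ α⁻¹⌋₊ := by
    simpa [g, Set.ncard_coe_finset] using Set.ncard_le_ncard hsub (Finset.finite_toSet _)
  exact (Nat.le_floor_iff (by positivity)).mp hcard

lemma isBigO_g (hα : 0 < α) :
    (fun k ↦ (g α k : ℝ)) =O[atTop] fun k : ℕ ↦ ((k ^ ⌈α⁻¹⌉₊ : ℕ) : ℝ) := by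
  have hsucc : (fun k : ℕ ↦ (k : ℝ) + 1) =O[atTop] fun k : ℕ ↦ (k : ℝ) :=
    (isBigO_refl _ _).add
      (isLittleO_const_left.mpr <| .inr <|
        tendsto_norm_atTop_atTop.comp tendsto_natCast_atTop_atTop).isBigO
  have hpow : (fun k ↦ (g α k : ℝ)) =O[atTop] fun k : ℕ ↦ ((k : ℝ) + 1) ^ ⌈α⁻¹⌉₊ := by
    refine .of_norm_le fun k ↦ ?_
    rw [RCLike.norm_natCast, ← Real.rpow_natCast]
    exact (g_le_rpow hα k).trans
      (Real.rpow_le_rpow_of_exponent_le (by simp) (Nat.le_ceil _))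
  simpa only [Nat.cast_pow] using hpow.trans (hsucc.pow _)

lemma summable_g_mul_norm_mul_pow (hα : 0 < α) {z : ℂ} (hz : ‖z‖ < 1) (u : ℂ) :
    Summable fun k ↦ (g α k : ℝ) * ‖u * z ^ k‖ := by
  refine ((summable_norm_mul_geometric_of_norm_lt_one hz (isBigO_g hα)).mul_left ‖u‖).congr
    fun k ↦ ?_
  rw [norm_mul, norm_mul, Complex.norm_natCast, mul_left_comm]

theorem norm_Q_sq_le (hα : 0 < α) {z : ℂ} (hz : ‖z‖ < 1) (u : ℂ) :
    ‖Q α z u‖ ^ 2 ≤ ‖Q α ‖z‖ ‖u‖‖ ^ 2 *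
      Real.exp (-(2 / (1 + ‖u‖) ^ 2) * ∑' k, g α k * (‖u * z ^ k‖ - (u * z ^ k).re)) := by
  have hle (k : ℕ) : ‖u * z ^ (k + 1)‖ ≤ ‖u‖ := by
    rw [norm_mul, norm_pow]
    exact mul_le_of_le_one_right (norm_nonneg u) (pow_le_one₀ (norm_nonneg z) hz.le)
  have hQ : Q α ‖z‖ ‖u‖ = ∏' k : ℕ, (1 + (‖u * z ^ (k + 1)‖ : ℂ)) ^ g α (k + 1) := by
    simp only [Q, norm_mul, norm_pow, Complex.ofReal_mul, Complex.ofReal_pow]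
  have hshift : ∑' k, g α k * (‖u * z ^ k‖ - (u * z ^ k).re) =
      ∑' k, g α (k + 1) * (‖u * z ^ (k + 1)‖ - (u * z ^ (k + 1)).re) := by
    refine (Nat.succ_injective.tsum_eq fun k hk ↦ ?_).symm
    have hk0 : k ≠ 0 := fun h ↦ hk (by simp [h, g_zero hα.le])
    exact ⟨k - 1, Nat.succ_pred hk0⟩
  rw [hQ, hshift]
  exact norm_tprod_one_add_pow_sq_le hle
    ((summable_nat_add_iff 1).mpr (summable_g_mul_norm_mul_pow hα hz u))

theorem Q_ratio_sq_bound_general (hα : 0 < α) {r : ℝ} (hr : 0 < r) (ρ t θ : ℝ) :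
    (‖Q α (Complex.exp (-(r : ℂ) - (t : ℂ) * Complex.I))
        (Complex.exp ((ρ : ℂ) + (θ : ℂ) * Complex.I))‖
      / ‖Q α (Complex.exp (-(r : ℂ))) (Complex.exp (ρ : ℂ))‖) ^ 2
    ≤ Real.exp (-(2 * Real.exp ρ / (1 + Real.exp ρ) ^ 2)
        * ∑' k : ℕ, (g α k : ℝ) * Real.exp (-(k : ℝ) * r) * (1 - Real.cos (θ - k * t))) := by
  set z := Complex.exp (-(r : ℂ) - (t : ℂ) * Complex.I)
  set u := Complex.exp ((ρ : ℂ) + (θ : ℂ) * Complex.I)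
  have hz : ‖z‖ = Real.exp (-r) := by simp [z, Complex.norm_exp]
  have hu : ‖u‖ = Real.exp ρ := by simp [u, Complex.norm_exp]
  have huz (k : ℕ) : u * z ^ k = Complex.exp ((ρ - k * r : ℝ) + (θ - k * t : ℝ) * Complex.I) := by
    rw [← Complex.exp_nat_mul, ← Complex.exp_add]
    push_cast
    ring_nf
  have hterm (k : ℕ) : g α k * (‖u * z ^ k‖ - (u * z ^ k).re) =
      Real.exp ρ * (g α k * Real.exp (-(k : ℝ) * r) * (1 - Real.cos (θ - k * t))) := by
    have hre : ((ρ - k * r : ℝ) + (θ - k * t : ℝ) * Complex.I).re = ρ + -k * r := by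
      simp [sub_eq_add_neg]
    have him : ((ρ - k * r : ℝ) + (θ - k * t : ℝ) * Complex.I).im = θ - k * t := by simp
    rw [huz, Complex.norm_exp, Complex.exp_re, hre, him, Real.exp_add]
    ring
  have hbound := norm_Q_sq_le hα (hz.trans_lt (Real.exp_lt_one_iff.mpr (neg_lt_zero.mpr hr))) u
  simp only [hterm, tsum_mul_left, hz, hu, Complex.ofReal_exp, Complex.ofReal_neg] at hbound
  rw [div_pow]
  refine div_le_of_le_mul₀ (by positivity) (by positivity) (hbound.trans_eq ?_)
  rw [mul_comm, ← mul_assoc, neg_mul, div_mul_eq_mul_div]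

end Multiplicity

/-- Basic estimate:
`(|Q(e^{−(r+it)}, e^{ρ+iθ})|/Q(e^{−r}, e^ρ))² ≤ exp(−(2e^ρ/(1+e^ρ)²)·∑_{k≥1} g(k) e^{−kr}(1−cos(θ−kt)))`. -/
theorem Q_ratio_sq_bound (α β : ℝ) (hα : 0 < α ∧ α < 1) (hβ : β = 1 / α)
    (r ρ t θ : ℝ) (hr : 0 < r) :
    (‖Q α (Complex.exp (-(r : ℂ) - (t : ℂ) * Complex.I))
        (Complex.exp ((ρ : ℂ) + (θ : ℂ) * Complex.I))‖
      / ‖Q α (Complex.exp (-(r : ℂ))) (Complex.exp (ρ : ℂ))‖) ^ 2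
    ≤ Real.exp (-(2 * Real.exp ρ / (1 + Real.exp ρ) ^ 2)
        * ∑' k : ℕ, (g α k : ℝ) * Real.exp (-(k : ℝ) * r) * (1 - Real.cos (θ - k * t))) :=
  Q_ratio_sq_bound_general hα.1 hr ρ t θ
end

section
/- Let 0<α<1 and β:=1/α. For each n let r=r_n>0 be the unique positive real with n = ∑_{k≥1} k·g(k)/(e^{kr}+1), and set B² = f''_{20}(r,0). Then there is a constant C>0 such that for all sufficiently large n, the number q(n) of restricted α-partitions of n satisfies q(n) = (e^{n·r+f(r,0)}/(√(2π)·B))·(1+E) with |E| ≤ C·r^{2β/7}. -/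
open Real

/-- `qn α n`: total number of restricted α-partitions of `n`. -/
noncomputable def qn (α : ℝ) (n : ℕ) : ℕ :=
  Set.ncard {A : Finset ℕ | (∀ a ∈ A, 1 ≤ a) ∧
    (∑ a ∈ A, ⌊(a : ℝ) ^ α⌋) = (n : ℤ)}

/-- `f(τ,σ) = ∑_{k≥1} g(k) log(1 + e^{σ−kτ})` -/
noncomputable def f (α : ℝ) (τ σ : ℝ) : ℝ :=
  ∑' k : ℕ, (g α k : ℝ) * Real.log (1 + Real.exp (σ - k * τ))

/-- the mixed partial derivative `∂^{p+q} f/∂τ^p∂σ^q` -/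
noncomputable def fpartial (α : ℝ) (p q : ℕ) (τ σ : ℝ) : ℝ :=
  iteratedDeriv p (fun τ' : ℝ => iteratedDeriv q
    (fun σ' : ℝ => ∑' k : ℕ, (g α k : ℝ) * Real.log (1 + Real.exp (σ' - k * τ'))) σ) τ

/-
Give each part `i` an independent Bernoulli variable that is `1` with probability
`1 / (e^{r a i} + 1)`. Then `q(n) e^{-nr - f(r, 0)}` is the probability that the sum `X` of the
chosen parts equals `n`, and the equation for `r` says that `n` is the mean of `X`; moreover
`f''_{20}(r, 0)` is its variance. Fourier inversion writes the probability as the integral over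
`[-π, π]` of the characteristic function of the centred sum. On `|θ| ≤ r` it is compared with the
Gaussian of the same variance factor by factor, with an error governed by `∑ i, a i ^ 3 e^{-r a i}`,
and on `r < |θ| ≤ π` the parts `1, 2, …, ⌈2π / r⌉` alone make it as small as `e^{-c / r}`. For
`N^β` parts up to `N` the variance has order `r^{-β-2}` and the sum of cubes order `r^{-β-3}`,
which leaves a relative error `r^{β/2}`.
-/

section CharacteristicFunction

lemma abs_cos_sub_taylor_le (y : ℝ) : |cos y - (1 - y ^ 2 / 2)| ≤ |y| ^ 3 / 2 := by
  rcases le_total |y| 1 with hy | hy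
  · refine (cos_bound hy).trans ?_
    have : |y| ^ 3 * |y| ≤ |y| ^ 3 * 1 := by gcongr
    linarith [pow_succ |y| 3, pow_nonneg (abs_nonneg y) 3]
  · have hsq : |y| ^ 2 * 1 ≤ |y| ^ 2 * |y| := by gcongr
    have hlower := one_sub_sq_div_two_le_cos (x := y)
    rw [abs_of_nonneg (by linarith), ← sq_abs]
    linarith [cos_le_one y, pow_succ |y| 2]

lemma norm_exp_mul_I_sub_taylor_le (y : ℝ) :
    ‖Complex.exp (y * Complex.I) - (1 + y * Complex.I - (y : ℂ) ^ 2 / 2)‖ ≤ |y| ^ 3 := by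
  have hsplit : Complex.exp (y * Complex.I) - (1 + y * Complex.I - (y : ℂ) ^ 2 / 2)
      = ((cos y - (1 - y ^ 2 / 2) : ℝ) : ℂ) + ((-(y - sin y) : ℝ) : ℂ) * Complex.I := by
    rw [Complex.exp_mul_I]; push_cast; ring
  calc _ ≤ |cos y - (1 - y ^ 2 / 2)| + |y - sin y| := by
        rw [hsplit]
        refine (norm_add_le _ _).trans_eq ?_
        rw [norm_mul, Complex.norm_I, mul_one, Complex.norm_real, Complex.norm_real,
          norm_neg, Real.norm_eq_abs, Real.norm_eq_abs]
    _ ≤ |y| ^ 3 / 2 + |y| ^ 3 / 6 := add_le_add (abs_cos_sub_taylor_le y) (abs_sub_sin_le y)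
    _ ≤ |y| ^ 3 := by linarith [pow_nonneg (abs_nonneg y) 3]

lemma abs_exp_neg_sub_le_self {y : ℝ} (hy : 0 ≤ y) : |exp (-y) - (1 - y)| ≤ y := by
  have hlower := one_sub_le_exp_neg y
  rw [abs_of_nonneg (by linarith)]
  linarith [exp_le_one_iff.2 (neg_nonpos.2 hy)]

lemma abs_exp_neg_sub_le_sq {y : ℝ} (hy : 0 ≤ y) : |exp (-y) - (1 - y)| ≤ y ^ 2 / 2 := by
  have hlower := one_sub_le_exp_neg y
  have hupper : exp (-y) ≤ 1 - y + y ^ 2 / 2 := by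
    rw [exp_neg, inv_le_iff_one_le_mul₀ (exp_pos y)]
    calc 1 ≤ (1 - y + y ^ 2 / 2) * (1 + y + y ^ 2 / 2) := by nlinarith [sq_nonneg (y ^ 2)]
      _ ≤ (1 - y + y ^ 2 / 2) * exp y := by
        gcongr
        · nlinarith [sq_nonneg (y - 1)]
        · exact quadratic_le_exp_of_nonneg hy
  rw [abs_of_nonneg (by linarith)]
  linarith

/-- The characteristic function `x ↦ 𝔼[e^{ixξ}]` of a Bernoulli variable `ξ` of parameter `p`. -/
noncomputable def bernoulliCharFun (p x : ℝ) : ℂ :=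
  1 - p + p * Complex.exp (x * Complex.I)

lemma norm_bernoulliCharFun_le_exp (p x : ℝ) :
    ‖bernoulliCharFun p x‖ ≤ exp (-(p * (1 - p) * (1 - cos x))) := by
  have hsplit : bernoulliCharFun p x
      = ((1 - p + p * cos x : ℝ) : ℂ) + ((p * sin x : ℝ) : ℂ) * Complex.I := by
    rw [bernoulliCharFun, Complex.exp_mul_I]; push_cast; ring
  have hsq : ‖bernoulliCharFun p x‖ ^ 2 = 1 - 2 * (p * (1 - p) * (1 - cos x)) := by
    rw [hsplit, ← Complex.normSq_eq_norm_sq, Complex.normSq_add_mul_I]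
    linear_combination p ^ 2 * sin_sq_add_cos_sq x
  refine (pow_le_pow_iff_left₀ (norm_nonneg _) (exp_pos _).le two_ne_zero).1 ?_
  rw [hsq, ← exp_nat_mul, Nat.cast_ofNat, mul_neg]
  exact one_sub_le_exp_neg _

lemma norm_bernoulliCharFun_le_one {p : ℝ} (hp0 : 0 ≤ p) (hp1 : p ≤ 1) (x : ℝ) :
    ‖bernoulliCharFun p x‖ ≤ 1 := by
  refine (norm_bernoulliCharFun_le_exp p x).trans (exp_le_one_iff.2 (neg_nonpos.2 ?_))
  exact mul_nonneg (mul_nonneg hp0 (sub_nonneg.2 hp1)) (sub_nonneg.2 (cos_le_one x))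

lemma abs_exp_neg_bernoulli_variance_sub_le {p : ℝ} (hp0 : 0 ≤ p) (hp1 : p ≤ 1) (x : ℝ) :
    |exp (-(p * (1 - p) * x ^ 2 / 2)) - (1 - p * (1 - p) * x ^ 2 / 2)| ≤ p * |x| ^ 3 := by
  have hvar : p * (1 - p) * x ^ 2 / 2 ≤ p * |x| ^ 2 := by
    rw [← sq_abs x]
    nlinarith [mul_nonneg hp0 (sq_nonneg |x|), mul_nonneg hp0 (mul_nonneg hp0 (sq_nonneg |x|))]
  have hvar0 : 0 ≤ p * (1 - p) * x ^ 2 / 2 :=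
    div_nonneg (mul_nonneg (mul_nonneg hp0 (sub_nonneg.2 hp1)) (sq_nonneg x)) zero_le_two
  rcases le_total 1 |x| with hx | hx
  · calc _ ≤ p * (1 - p) * x ^ 2 / 2 := abs_exp_neg_sub_le_self hvar0
      _ ≤ p * |x| ^ 2 * 1 := by rwa [mul_one]
      _ ≤ p * |x| ^ 2 * |x| := by gcongr
      _ = p * |x| ^ 3 := by ring
  · calc _ ≤ (p * (1 - p) * x ^ 2 / 2) ^ 2 / 2 := abs_exp_neg_sub_le_sq hvar0
      _ ≤ (p * |x| ^ 2) ^ 2 := by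
        have := pow_le_pow_left₀ hvar0 hvar 2
        linarith [sq_nonneg (p * |x| ^ 2)]
      _ = (p * |x|) * (p * |x| ^ 3) := by ring
      _ ≤ 1 * (p * |x| ^ 3) := by gcongr; exact mul_le_one₀ hp1 (abs_nonneg x) hx
      _ = p * |x| ^ 3 := one_mul _

lemma norm_centered_bernoulliCharFun_sub_gaussian_le {p : ℝ} (hp0 : 0 ≤ p) (hp1 : p ≤ 1) (x : ℝ) :
    ‖bernoulliCharFun p x * Complex.exp ((-(p * x) : ℝ) * Complex.I)
      - (exp (-(p * (1 - p) * x ^ 2 / 2)) : ℝ)‖ ≤ 2 * (p * |x| ^ 3) := by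
  set taylorError : ℝ → ℂ := fun y =>
    Complex.exp (y * Complex.I) - (1 + y * Complex.I - (y : ℂ) ^ 2 / 2) with htaylor
  set v : ℝ := p * (1 - p) * x ^ 2 / 2 with hv
  have hq : 0 ≤ 1 - p := sub_nonneg.2 hp1
  have hsplit : bernoulliCharFun p x * Complex.exp ((-(p * x) : ℝ) * Complex.I) - (exp (-v) : ℝ)
      = ((1 - p : ℝ) : ℂ) * taylorError (-(p * x)) + (p : ℂ) * taylorError ((1 - p) * x)
        - ((exp (-v) - (1 - v) : ℝ) : ℂ) := by
    have hexp : Complex.exp (((1 - p) * x : ℝ) * Complex.I)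
        = Complex.exp (x * Complex.I) * Complex.exp ((-(p * x) : ℝ) * Complex.I) := by
      rw [← Complex.exp_add]; congr 1; push_cast; ring
    simp only [htaylor, bernoulliCharFun, hexp, hv]
    push_cast
    ring
  calc _ ≤ (1 - p) * |-(p * x)| ^ 3 + p * |(1 - p) * x| ^ 3 + p * |x| ^ 3 := by
        rw [hsplit]
        refine (norm_sub_le _ _).trans (add_le_add ((norm_add_le _ _).trans
          (add_le_add ?_ ?_)) ?_)
        · rw [norm_mul, Complex.norm_real, Real.norm_of_nonneg hq]
          gcongr
          exact norm_exp_mul_I_sub_taylor_le _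
        · rw [norm_mul, Complex.norm_real, Real.norm_of_nonneg hp0]
          gcongr
          exact norm_exp_mul_I_sub_taylor_le _
        · rw [Complex.norm_real, Real.norm_eq_abs]
          exact abs_exp_neg_bernoulli_variance_sub_le hp0 hp1 x
    _ = ((1 - p) * (p ^ 2 + (1 - p) ^ 2)) * (p * |x| ^ 3) + p * |x| ^ 3 := by
        rw [abs_neg, abs_mul, abs_mul, abs_of_nonneg hp0, abs_of_nonneg hq]; ring
    _ ≤ 1 * (p * |x| ^ 3) + p * |x| ^ 3 := by
        gcongr
        nlinarith [mul_nonneg hp0 hq]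
    _ = 2 * (p * |x| ^ 3) := by ring

end CharacteristicFunction

section ProductComparison

variable {ι R : Type*} [NormedCommRing R] [NormOneClass R]

lemma norm_prod_sub_prod_le {S : Finset ι} {a b : ι → R} {c : ι → ℝ} {D : ℝ}
    (hc : ∀ i ∈ S, 0 ≤ c i) (hD : ∀ i ∈ S, 1 ≤ D * c i)
    (ha : ∀ i ∈ S, ‖a i‖ ≤ c i) (hb : ∀ i ∈ S, ‖b i‖ ≤ c i) :
    ‖∏ i ∈ S, a i - ∏ i ∈ S, b i‖ ≤ (∏ i ∈ S, c i) * (D * ∑ i ∈ S, ‖a i - b i‖) := by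
  classical
  induction S using Finset.induction_on with
  | empty => simp
  | insert i S hi ih =>
    rw [Finset.forall_mem_insert] at hc hD ha hb
    have hprod : ‖∏ j ∈ S, a j‖ ≤ ∏ j ∈ S, c j :=
      (Finset.norm_prod_le S a).trans (Finset.prod_le_prod (fun _ _ => norm_nonneg _) ha.2)
    have hprod0 : 0 ≤ ∏ j ∈ S, c j := Finset.prod_nonneg hc.2
    simp only [Finset.prod_insert hi, Finset.sum_insert hi]
    calc ‖a i * ∏ j ∈ S, a j - b i * ∏ j ∈ S, b j‖
        = ‖(a i - b i) * ∏ j ∈ S, a j + b i * (∏ j ∈ S, a j - ∏ j ∈ S, b j)‖ := by ring_nf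
      _ ≤ ‖a i - b i‖ * ‖∏ j ∈ S, a j‖ + ‖b i‖ * ‖∏ j ∈ S, a j - ∏ j ∈ S, b j‖ :=
          (norm_add_le _ _).trans (add_le_add (norm_mul_le _ _) (norm_mul_le _ _))
      _ ≤ 1 * (‖a i - b i‖ * ∏ j ∈ S, c j)
          + c i * ((∏ j ∈ S, c j) * (D * ∑ j ∈ S, ‖a j - b j‖)) := by
          rw [one_mul]
          gcongr
          exacts [hc.1, hb.1, ih hc.2 hD.2 ha.2 hb.2]
      _ ≤ (D * c i) * (‖a i - b i‖ * ∏ j ∈ S, c j)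
          + c i * ((∏ j ∈ S, c j) * (D * ∑ j ∈ S, ‖a j - b j‖)) := by
          gcongr
          exact hD.1
      _ = _ := by ring

end ProductComparison

section IntegralEstimates

open MeasureTheory

lemma norm_exp_mul_I_sub_exp_mul_I_le (x y : ℝ) :
    ‖Complex.exp (x * Complex.I) - Complex.exp (y * Complex.I)‖ ≤ |x - y| := by
  have hfactor : Complex.exp (x * Complex.I) - Complex.exp (y * Complex.I)
      = Complex.exp (y * Complex.I) * (Complex.exp (Complex.I * ((x - y : ℝ) : ℂ)) - 1) := by
    rw [mul_sub, ← Complex.exp_add, mul_one]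
    congr 2; push_cast; ring
  rw [hfactor, norm_mul, Complex.norm_exp_ofReal_mul_I, one_mul]
  exact norm_exp_I_mul_ofReal_sub_one_le

lemma integral_exp_int_mul_I (d : ℤ) :
    ∫ θ in (-π)..π, Complex.exp (d * Complex.I * θ) = if d = 0 then (2 * π : ℂ) else 0 := by
  split_ifs with hd
  · simp [hd, two_mul]
  · have hc : (d : ℂ) * Complex.I ≠ 0 := mul_ne_zero (by exact_mod_cast hd) Complex.I_ne_zero
    have hperiod : (d : ℂ) * Complex.I * (π : ℝ)
        = (d : ℂ) * Complex.I * ((-π : ℝ) : ℂ) + d * (2 * π * Complex.I) := by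
      push_cast; ring
    rw [integral_exp_mul_complex hc, hperiod, Complex.exp_add, Complex.exp_int_mul_two_pi_mul_I,
      mul_one, sub_self, zero_div]

lemma integrable_abs_pow_three_mul_gaussian {W : ℝ} (hW : 0 < W) :
    Integrable fun θ : ℝ => |θ| ^ 3 * exp (-W * θ ^ 2) := by
  refine (integrable_rpow_mul_exp_neg_mul_sq hW (s := (3 : ℕ)) (by norm_num)).norm.congr
    (.of_forall fun θ => ?_)
  simp only [rpow_natCast, norm_mul, norm_pow, Real.norm_eq_abs, abs_exp]

lemma integral_abs_pow_three_mul_gaussian {W : ℝ} (hW : 0 < W) :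
    ∫ θ : ℝ, |θ| ^ 3 * exp (-W * θ ^ 2) = 1 / W ^ 2 := by
  have hfold := integral_comp_abs (f := fun x => x ^ 3 * exp (-W * x ^ 2))
  simp only [sq_abs] at hfold
  have hhalf := integral_rpow_mul_exp_neg_mul_rpow (p := (2 : ℕ)) (q := (3 : ℕ)) (b := W)
    (by norm_num) (by norm_num) hW
  simp only [rpow_natCast] at hhalf
  rw [hfold, hhalf, show -((3 : ℕ) + 1 : ℝ) / (2 : ℕ) = ((-2 : ℤ) : ℝ) by norm_num,
    show ((3 : ℕ) + 1 : ℝ) / (2 : ℕ) = 2 by norm_num, rpow_intCast, Gamma_two, zpow_neg, zpow_ofNat]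
  field_simp
  norm_num

lemma norm_indicator_sub_gaussian_le {Φ : ℝ → ℂ} {b W r T ε δ K : ℝ}
    (hWb : W ≤ b) (hr : 0 < r) (hrT : r ≤ T) (hε : 0 ≤ ε) (hδ : 0 ≤ δ) (hK : 0 ≤ K)
    (hcentral : ∀ θ, |θ| ≤ r →
      ‖Φ θ - (exp (-b * θ ^ 2) : ℝ)‖ ≤ ε + K * (|θ| ^ 3 * exp (-W * θ ^ 2)))
    (hminor : ∀ θ, r < |θ| → |θ| ≤ T → ‖Φ θ‖ ≤ δ) (θ : ℝ) :
    ‖(Set.Icc (-T) T).indicator Φ θ - (exp (-b * θ ^ 2) : ℝ)‖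
      ≤ (Set.Icc (-T) T).indicator (fun _ => ε + δ) θ
        + (K + 1 / r ^ 3) * (|θ| ^ 3 * exp (-W * θ ^ 2)) := by
  rcases le_or_gt |θ| r with hθ | hθ
  · have hmem : θ ∈ Set.Icc (-T) T := abs_le.1 (hθ.trans hrT)
    rw [Set.indicator_of_mem hmem, Set.indicator_of_mem hmem]
    refine (hcentral θ hθ).trans ?_
    gcongr
    · exact le_add_of_nonneg_right hδ
    · exact le_add_of_nonneg_right (by positivity)
  · refine (norm_sub_le _ _).trans (add_le_add ?_ ?_)
    · by_cases hmem : θ ∈ Set.Icc (-T) T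
      · rw [Set.indicator_of_mem hmem, Set.indicator_of_mem hmem]
        exact (hminor θ hθ (abs_le.2 hmem)).trans (le_add_of_nonneg_left hε)
      · rw [Set.indicator_of_notMem hmem, Set.indicator_of_notMem hmem, norm_zero]
    · have hcube : 1 ≤ 1 / r ^ 3 * |θ| ^ 3 := by
        rw [one_div_mul_eq_div, one_le_div (by positivity)]
        gcongr
      calc ‖((exp (-b * θ ^ 2) : ℝ) : ℂ)‖ = exp (-b * θ ^ 2) := by
            rw [Complex.norm_real, Real.norm_of_nonneg (exp_pos _).le]
        _ ≤ (1 / r ^ 3 * |θ| ^ 3) * exp (-W * θ ^ 2) := by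
            refine le_trans ?_ (le_mul_of_one_le_left (exp_pos _).le hcube)
            gcongr
        _ = 1 / r ^ 3 * (|θ| ^ 3 * exp (-W * θ ^ 2)) := mul_assoc _ _ _
        _ ≤ _ := by
            gcongr
            exact le_add_of_nonneg_left hK

lemma norm_integral_sub_gaussian_le {Φ : ℝ → ℂ} (hΦ : Continuous Φ) {b W r T ε δ K : ℝ}
    (hW : 0 < W) (hWb : W ≤ b) (hr : 0 < r) (hrT : r ≤ T) (hε : 0 ≤ ε) (hδ : 0 ≤ δ) (hK : 0 ≤ K)
    (hcentral : ∀ θ, |θ| ≤ r →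
      ‖Φ θ - (exp (-b * θ ^ 2) : ℝ)‖ ≤ ε + K * (|θ| ^ 3 * exp (-W * θ ^ 2)))
    (hminor : ∀ θ, r < |θ| → |θ| ≤ T → ‖Φ θ‖ ≤ δ) :
    ‖(∫ θ in (-T)..T, Φ θ) - (√(π / b) : ℝ)‖
      ≤ 2 * T * (ε + δ) + (K + 1 / r ^ 3) * (1 / W ^ 2) := by
  have hT : -T ≤ T := by linarith
  have hindicator {E : Type} [NormedAddCommGroup E] [NormedSpace ℝ E] {u : ℝ → E}
      (hu : Continuous u) : Integrable ((Set.Icc (-T) T).indicator u) ∧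
        ∫ θ, (Set.Icc (-T) T).indicator u θ = ∫ θ in (-T)..T, u θ := by
    refine ⟨(integrable_indicator_iff measurableSet_Icc).2 hu.integrableOn_Icc, ?_⟩
    rw [integral_indicator measurableSet_Icc, integral_Icc_eq_integral_Ioc,
      intervalIntegral.integral_of_le hT]
  obtain ⟨hΦi, hΦint⟩ := hindicator hΦ
  obtain ⟨hci, hcint⟩ := hindicator (continuous_const (y := ε + δ))
  have hgauss : Integrable fun θ : ℝ => ((exp (-b * θ ^ 2) : ℝ) : ℂ) :=
    (integrable_exp_neg_mul_sq (hW.trans_le hWb)).ofReal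
  have hcubic := (integrable_abs_pow_three_mul_gaussian hW).const_mul (K + 1 / r ^ 3)
  have hbound := norm_integral_le_of_norm_le (hci.add hcubic) (.of_forall
    (norm_indicator_sub_gaussian_le hWb hr hrT hε hδ hK hcentral hminor))
  rw [integral_sub hΦi hgauss, hΦint, integral_complex_ofReal, integral_gaussian] at hbound
  refine hbound.trans_eq ?_
  simp only [Pi.add_apply]
  rw [integral_add hci hcubic, hcint, integral_const_mul, integral_abs_pow_three_mul_gaussian hW,
    intervalIntegral.integral_const, smul_eq_mul]
  ring

end IntegralEstimates

section Elementary

lemma two_div_pi_sq_le_half : 2 / π ^ 2 ≤ 1 / 2 := by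
  rw [div_le_div_iff₀ (by positivity) two_pos]
  nlinarith [pi_gt_three]

lemma sum_cos_le_pi_div {θ : ℝ} (hθ0 : 0 < θ) (hθπ : θ ≤ π) (K : ℕ) :
    ∑ k ∈ Finset.range K, cos ((k + 1) * θ) ≤ π / θ := by
  have hsin : θ / π ≤ sin (θ / 2) := by
    calc θ / π = 2 / π * (θ / 2) := by ring
      _ ≤ sin (θ / 2) := mul_le_sin (by linarith) (by linarith)
  have hsin0 : 0 < sin (θ / 2) := (div_pos hθ0 pi_pos).trans_le hsin
  have hdirichlet : sin (θ / 2) * ∑ k ∈ Finset.range K, cos ((k + 1) * θ) ≤ 1 := by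
    have hsum := sin_mul_sum_cos K θ θ
    simp only [show ∀ k : ℕ, θ * k + θ = (k + 1) * θ from fun k => by ring] at hsum
    rw [hsum]
    refine (le_abs_self _).trans ?_
    rw [abs_mul]
    exact mul_le_one₀ (abs_sin_le_one _) (abs_nonneg _) (abs_cos_le_one _)
  calc _ ≤ 1 / sin (θ / 2) := (le_div_iff₀' hsin0).2 hdirichlet
    _ ≤ 1 / (θ / π) := by gcongr
    _ = π / θ := one_div_div _ _

lemma pi_div_le_sum_one_sub_cos {r θ : ℝ} {K : ℕ} (hr : 0 < r) (hθr : r < |θ|) (hθπ : |θ| ≤ π)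
    (hK : 2 * π / r ≤ K) :
    π / r ≤ ∑ k ∈ Finset.range K, (1 - cos ((k + 1) * θ)) := by
  have habs : ∀ k : ℕ, cos ((k + 1) * θ) = cos ((k + 1) * |θ|) := fun k => by
    rw [← cos_abs, abs_mul, abs_of_nonneg (by positivity : (0 : ℝ) ≤ k + 1)]
  have hcos : ∑ k ∈ Finset.range K, cos ((k + 1) * |θ|) ≤ π / r :=
    (sum_cos_le_pi_div (hr.trans hθr) hθπ K).trans (by gcongr)
  rw [Finset.sum_sub_distrib, Finset.sum_const, Finset.card_range, nsmul_one,
    Finset.sum_congr rfl fun k _ => habs k]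
  linarith [show 2 * π / r = π / r + π / r by ring]

lemma sigmoid_neg_le_exp_neg (x : ℝ) : sigmoid (-x) ≤ exp (-x) := by
  rw [← sigmoid_mul_rexp_neg]
  exact mul_le_of_le_one_left (exp_pos _).le (sigmoid_le_one x)

lemma exp_neg_div_four_le_sigmoid_mul {x : ℝ} (hx : 0 ≤ x) :
    exp (-x) / 4 ≤ sigmoid (-x) * (1 - sigmoid (-x)) := by
  have hhalf : 1 / 2 ≤ sigmoid x := by
    simpa only [sigmoid_zero, one_div] using sigmoid_le hx
  calc exp (-x) / 4 = (1 / 2) * exp (-x) * (1 / 2) := by ring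
    _ ≤ sigmoid x * exp (-x) * sigmoid x := by gcongr
    _ = sigmoid (-x) * (1 - sigmoid (-x)) := by rw [sigmoid_mul_rexp_neg, sigmoid_neg]; ring

lemma pow_mul_exp_neg_mul_le (j : ℕ) {x r : ℝ} (hx : 0 ≤ x) (hr : 0 < r) :
    x ^ j * exp (-(x * r)) ≤ j.factorial * (2 / r) ^ j * exp (-(x * (r / 2))) := by
  have hpow : (x * (r / 2)) ^ j ≤ j.factorial * exp (x * (r / 2)) := by
    rw [← div_le_iff₀' (by positivity)]
    exact pow_div_factorial_le_exp _ (by positivity) j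
  calc x ^ j * exp (-(x * r)) = (2 / r * (x * (r / 2))) ^ j * exp (-(x * r)) := by
        rw [show 2 / r * (x * (r / 2)) = x by field_simp]
    _ = (2 / r) ^ j * exp (-(x * r)) * (x * (r / 2)) ^ j := by rw [mul_pow]; ring
    _ ≤ (2 / r) ^ j * exp (-(x * r)) * (j.factorial * exp (x * (r / 2))) := by gcongr
    _ = j.factorial * (2 / r) ^ j * (exp (-(x * r)) * exp (x * (r / 2))) := by ring
    _ = j.factorial * (2 / r) ^ j * exp (-(x * (r / 2))) := by rw [← exp_add]; ring_nf

end Elementary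

section TiltedMeasure

variable {ι : Type*} (a : ι → ℕ) (r : ℝ)

/-- The probability `1 / (e^{r a i} + 1)` with which part `i` is used when the distinct-part
partitions of size `m` are given weights proportional to `e^{-rm}`; under this measure the parts
are used independently of each other. -/
noncomputable def usageProb (i : ι) : ℝ := sigmoid (-(a i * r))

/-- The variance of the contribution of part `i` to the size of a random partition. -/
noncomputable def partVariance (i : ι) : ℝ :=
  a i ^ 2 * (usageProb a r i * (1 - usageProb a r i))

/-- The characteristic function of the size of a random partition with parts indexed by `S`. -/
noncomputable def sizeCharFun (S : Finset ι) (θ : ℝ) : ℂ :=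
  ∏ i ∈ S, bernoulliCharFun (usageProb a r i) (a i * θ)

/-- The characteristic function of the centred contribution of part `i`. -/
noncomputable def centeredCharFun (i : ι) (θ : ℝ) : ℂ :=
  bernoulliCharFun (usageProb a r i) (a i * θ)
    * Complex.exp ((-(usageProb a r i * (a i * θ)) : ℝ) * Complex.I)

/-- The cumulant generating function `∑' i, log (1 + e^{-r a i})` of the tilted measure, for the
parts indexed by all of `ι`. -/
noncomputable def logPartitionFun : ℝ := ∑' i, log (1 + exp (-(a i * r)))

/-- The number of finite sets of indices whose parts sum to `n`. -/
noncomputable def subsetSumCount (n : ℕ) : ℕ := {A : Finset ι | ∑ i ∈ A, a i = n}.ncard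

lemma usageProb_nonneg (i : ι) : 0 ≤ usageProb a r i := sigmoid_nonneg _

lemma usageProb_le_one (i : ι) : usageProb a r i ≤ 1 := sigmoid_le_one _

lemma usageProb_le_exp_neg (i : ι) : usageProb a r i ≤ exp (-(a i * r)) :=
  sigmoid_neg_le_exp_neg _

lemma partVariance_nonneg (i : ι) : 0 ≤ partVariance a r i :=
  mul_nonneg (sq_nonneg _)
    (mul_nonneg (usageProb_nonneg a r i) (sub_nonneg.2 (usageProb_le_one a r i)))

lemma partVariance_le (i : ι) : partVariance a r i ≤ a i ^ 2 * exp (-(a i * r)) := by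
  unfold partVariance
  gcongr
  refine (mul_le_of_le_one_right (usageProb_nonneg a r i) ?_).trans (usageProb_le_exp_neg a r i)
  exact sub_le_self _ (usageProb_nonneg a r i)

lemma partVariance_le_sq (i : ι) : partVariance a r i ≤ a i ^ 2 :=
  mul_le_of_le_one_right (sq_nonneg _) (mul_le_one₀ (usageProb_le_one a r i)
    (sub_nonneg.2 (usageProb_le_one a r i)) (sub_le_self _ (usageProb_nonneg a r i)))

variable {a r}

lemma norm_sizeCharFun_anti {S U : Finset ι} (hUS : U ⊆ S) (θ : ℝ) :
    ‖sizeCharFun a r S θ‖ ≤ ‖sizeCharFun a r U θ‖ := by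
  rw [sizeCharFun, sizeCharFun, norm_prod, norm_prod]
  exact Finset.prod_le_prod_of_subset_of_le_one hUS (fun _ _ => norm_nonneg _)
    fun i _ _ => norm_bernoulliCharFun_le_one (usageProb_nonneg a r i) (usageProb_le_one a r i) _

lemma norm_sizeCharFun_le_one (S : Finset ι) (θ : ℝ) : ‖sizeCharFun a r S θ‖ ≤ 1 := by
  simpa [sizeCharFun] using norm_sizeCharFun_anti (a := a) (r := r) S.empty_subset θ

lemma continuous_sizeCharFun (S : Finset ι) : Continuous (sizeCharFun a r S) := by
  unfold sizeCharFun bernoulliCharFun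
  fun_prop

lemma norm_centeredCharFun (i : ι) (θ : ℝ) :
    ‖centeredCharFun a r i θ‖ = ‖bernoulliCharFun (usageProb a r i) (a i * θ)‖ := by
  rw [centeredCharFun, norm_mul, Complex.norm_exp_ofReal_mul_I, mul_one]

lemma norm_centeredCharFun_le_one (i : ι) (θ : ℝ) : ‖centeredCharFun a r i θ‖ ≤ 1 := by
  rw [norm_centeredCharFun]
  exact norm_bernoulliCharFun_le_one (usageProb_nonneg a r i) (usageProb_le_one a r i) _

lemma norm_centeredCharFun_le_gaussian {i : ι} {θ : ℝ} (hi : a i * r ≤ 1) (hθ : |θ| ≤ r) :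
    ‖centeredCharFun a r i θ‖ ≤ exp (-(2 / π ^ 2 * partVariance a r i) * θ ^ 2) := by
  have hphase : |a i * θ| ≤ π := by
    calc |a i * θ| ≤ a i * r := by rw [abs_mul, Nat.abs_cast]; gcongr
      _ ≤ π := by linarith [pi_gt_three]
  rw [norm_centeredCharFun]
  refine (norm_bernoulliCharFun_le_exp _ _).trans (exp_le_exp.2 ?_)
  have hpq : 0 ≤ usageProb a r i * (1 - usageProb a r i) :=
    mul_nonneg (usageProb_nonneg a r i) (sub_nonneg.2 (usageProb_le_one a r i))
  rw [neg_mul, neg_le_neg_iff]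
  calc 2 / π ^ 2 * partVariance a r i * θ ^ 2
      = usageProb a r i * (1 - usageProb a r i) * (2 / π ^ 2 * (a i * θ) ^ 2) := by
        rw [partVariance]; ring
    _ ≤ usageProb a r i * (1 - usageProb a r i) * (1 - cos (a i * θ)) := by
        gcongr
        linarith [cos_le_one_sub_mul_cos_sq hphase]

lemma exp_neg_half_partVariance_le_gaussian (i : ι) (θ : ℝ) :
    exp (-(partVariance a r i / 2) * θ ^ 2)
      ≤ exp (-(2 / π ^ 2 * partVariance a r i) * θ ^ 2) := by
  have hv := partVariance_nonneg a r i
  gcongr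
  nlinarith [two_div_pi_sq_le_half]

lemma exp_neg_half_partVariance_le_one (i : ι) (θ : ℝ) :
    exp (-(partVariance a r i / 2) * θ ^ 2) ≤ 1 := by
  rw [neg_mul, exp_le_one_iff, neg_nonpos]
  exact mul_nonneg (div_nonneg (partVariance_nonneg a r i) zero_le_two) (sq_nonneg θ)

lemma norm_centeredCharFun_sub_gaussian_le (i : ι) (θ : ℝ) :
    ‖centeredCharFun a r i θ - (exp (-(partVariance a r i / 2) * θ ^ 2) : ℝ)‖
      ≤ 2 * |θ| ^ 3 * (a i ^ 3 * exp (-(a i * r))) := by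
  have hexponent : -(partVariance a r i / 2) * θ ^ 2
      = -(usageProb a r i * (1 - usageProb a r i) * (a i * θ) ^ 2 / 2) := by
    rw [partVariance]; ring
  rw [hexponent]
  calc _ ≤ 2 * (usageProb a r i * |a i * θ| ^ 3) :=
        norm_centered_bernoulliCharFun_sub_gaussian_le (usageProb_nonneg a r i)
          (usageProb_le_one a r i) _
    _ ≤ 2 * (exp (-(a i * r)) * |a i * θ| ^ 3) := by
        gcongr
        exact usageProb_le_exp_neg a r i
    _ = 2 * |θ| ^ 3 * (a i ^ 3 * exp (-(a i * r))) := by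
        rw [abs_mul, abs_of_nonneg (a i).cast_nonneg]; ring

lemma prod_centeredCharFun (S : Finset ι) (θ : ℝ) :
    ∏ i ∈ S, centeredCharFun a r i θ = sizeCharFun a r S θ
      * Complex.exp ((-((∑ i ∈ S, a i * usageProb a r i) * θ) : ℝ) * Complex.I) := by
  simp only [centeredCharFun, Finset.prod_mul_distrib, sizeCharFun, ← Complex.exp_sum,
    ← Finset.sum_mul, ← Complex.ofReal_sum]
  congr 4
  rw [Finset.sum_neg_distrib, Finset.sum_mul]
  simp only [mul_comm, mul_left_comm]

lemma one_le_exp_one_mul_gaussian {i : ι} {θ : ℝ} (hi : a i * r ≤ 1) (hθ : |θ| ≤ r) :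
    1 ≤ exp 1 * exp (-(2 / π ^ 2 * partVariance a r i) * θ ^ 2) := by
  rw [← exp_add, one_le_exp_iff, neg_mul, ← sub_eq_add_neg, sub_nonneg]
  calc 2 / π ^ 2 * partVariance a r i * θ ^ 2 ≤ 1 * (a i : ℝ) ^ 2 * r ^ 2 := by
        rw [← sq_abs θ]
        gcongr
        · exact partVariance_nonneg a r i
        · exact two_div_pi_sq_le_half.trans one_half_lt_one.le
        · exact partVariance_le_sq a r i
    _ = (a i * r) ^ 2 := by ring
    _ ≤ 1 := pow_le_one₀ (mul_nonneg (a i).cast_nonneg ((abs_nonneg θ).trans hθ)) hi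

/- Only the factors `i ∈ T`, for which `a i * θ` stays bounded, supply Gaussian decay; the others
are merely bounded by `1`. -/
lemma norm_prod_centeredCharFun_sub_gaussian_le {S T : Finset ι} (hTS : T ⊆ S)
    (hT : ∀ i ∈ T, a i * r ≤ 1) {θ : ℝ} (hθ : |θ| ≤ r) :
    ‖∏ i ∈ S, centeredCharFun a r i θ
        - (exp (-((∑ i ∈ S, partVariance a r i) / 2) * θ ^ 2) : ℝ)‖
      ≤ 2 * exp 1 * (∑ i ∈ S, (a i : ℝ) ^ 3 * exp (-(a i * r)))
        * (|θ| ^ 3 * exp (-(2 / π ^ 2 * ∑ i ∈ T, partVariance a r i) * θ ^ 2)) := by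
  classical
  set c : ι → ℝ := fun i =>
    if i ∈ T then exp (-(2 / π ^ 2 * partVariance a r i) * θ ^ 2) else 1 with hc
  have hgauss : ((exp (-((∑ i ∈ S, partVariance a r i) / 2) * θ ^ 2) : ℝ) : ℂ)
      = ∏ i ∈ S, ((exp (-(partVariance a r i / 2) * θ ^ 2) : ℝ) : ℂ) := by
    rw [← Complex.ofReal_prod, ← exp_sum, ← Finset.sum_mul, Finset.sum_neg_distrib,
      Finset.sum_div]
  have hprodc : ∏ i ∈ S, c i = exp (-(2 / π ^ 2 * ∑ i ∈ T, partVariance a r i) * θ ^ 2) := by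
    rw [Finset.prod_ite_mem, Finset.inter_eq_right.2 hTS, ← exp_sum, ← Finset.sum_mul,
      Finset.sum_neg_distrib, Finset.mul_sum]
  have hcenter : ∀ i ∈ S, ‖centeredCharFun a r i θ‖ ≤ c i := fun i _ => by
    simp only [hc]
    split_ifs with hi
    · exact norm_centeredCharFun_le_gaussian (hT i hi) hθ
    · exact norm_centeredCharFun_le_one i θ
  have hnormal : ∀ i ∈ S, ‖((exp (-(partVariance a r i / 2) * θ ^ 2) : ℝ) : ℂ)‖ ≤ c i :=
      fun i _ => by
    rw [Complex.norm_real, Real.norm_of_nonneg (exp_pos _).le]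
    simp only [hc]
    split_ifs
    · exact exp_neg_half_partVariance_le_gaussian i θ
    · exact exp_neg_half_partVariance_le_one i θ
  have hc0 : ∀ i ∈ S, 0 ≤ c i := fun i hi => (norm_nonneg _).trans (hcenter i hi)
  have hD : ∀ i ∈ S, 1 ≤ exp 1 * c i := fun i _ => by
    simp only [hc]
    split_ifs with hi
    · exact one_le_exp_one_mul_gaussian (hT i hi) hθ
    · simp
  rw [hgauss]
  refine (norm_prod_sub_prod_le hc0 hD hcenter hnormal).trans ?_
  rw [hprodc]
  calc _ ≤ exp (-(2 / π ^ 2 * ∑ i ∈ T, partVariance a r i) * θ ^ 2)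
        * (exp 1 * ∑ i ∈ S, 2 * |θ| ^ 3 * (a i ^ 3 * exp (-(a i * r)))) := by
        gcongr with i
        exact norm_centeredCharFun_sub_gaussian_le i θ
    _ = _ := by rw [← Finset.mul_sum]; ring

lemma norm_sizeCharFun_mul_exp_sub_gaussian_le {S T : Finset ι} (hTS : T ⊆ S)
    (hT : ∀ i ∈ T, a i * r ≤ 1) (x : ℝ) {θ : ℝ} (hθ : |θ| ≤ r) :
    ‖sizeCharFun a r S θ * Complex.exp ((-(x * θ) : ℝ) * Complex.I)
        - (exp (-((∑ i ∈ S, partVariance a r i) / 2) * θ ^ 2) : ℝ)‖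
      ≤ |x - ∑ i ∈ S, a i * usageProb a r i| * r
        + 2 * exp 1 * (∑ i ∈ S, (a i : ℝ) ^ 3 * exp (-(a i * r)))
        * (|θ| ^ 3 * exp (-(2 / π ^ 2 * ∑ i ∈ T, partVariance a r i) * θ ^ 2)) := by
  set μ := ∑ i ∈ S, a i * usageProb a r i with hμ
  have hshift : ‖sizeCharFun a r S θ * (Complex.exp ((-(x * θ) : ℝ) * Complex.I)
      - Complex.exp ((-(μ * θ) : ℝ) * Complex.I))‖ ≤ |x - μ| * r := by
    rw [norm_mul]
    refine (mul_le_of_le_one_left (norm_nonneg _) (norm_sizeCharFun_le_one S θ)).trans ?_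
    refine (norm_exp_mul_I_sub_exp_mul_I_le _ _).trans ?_
    rw [neg_sub_neg, ← sub_mul, abs_mul, abs_sub_comm]
    gcongr
  refine le_trans (le_of_eq ?_) ((norm_add_le _ _).trans
    (add_le_add hshift (norm_prod_centeredCharFun_sub_gaussian_le hTS hT hθ)))
  rw [prod_centeredCharFun, ← hμ]
  ring_nf

lemma norm_bernoulliCharFun_usageProb_le_exp {i : ι} {M : ℝ} (hr : 0 ≤ r) (hi : a i * r ≤ M)
    (θ : ℝ) : ‖bernoulliCharFun (usageProb a r i) (a i * θ)‖
      ≤ exp (-(exp (-M) / 4 * (1 - cos (a i * θ)))) := by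
  have hprob : exp (-M) / 4 ≤ usageProb a r i * (1 - usageProb a r i) := by
    refine le_trans ?_ (exp_neg_div_four_le_sigmoid_mul (by positivity))
    gcongr
  refine (norm_bernoulliCharFun_le_exp _ _).trans ?_
  have hcos := sub_nonneg.2 (cos_le_one (a i * θ))
  gcongr

lemma exists_norm_sizeCharFun_le_exp (hr0 : 0 < r) (hrπ : r ≤ π) (ha : ∀ k, ∃ i, a i = k + 1) :
    ∃ U : Finset ι, ∀ θ, r < |θ| → |θ| ≤ π →
      ‖sizeCharFun a r U θ‖ ≤ exp (-(exp (-(3 * π)) * (π / 4) / r)) := by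
  classical
  choose index hindex using ha
  set K := ⌈2 * π / r⌉₊
  have hKr : K * r ≤ 3 * π := by
    have : (K : ℝ) ≤ 2 * π / r + 1 := (Nat.ceil_lt_add_one (by positivity)).le
    calc (K : ℝ) * r ≤ (2 * π / r + 1) * r := by gcongr
      _ = 2 * π + r := by field_simp
      _ ≤ 3 * π := by linarith
  have hinj : Set.InjOn (fun k => index k) (Finset.range K : Set ℕ) := fun k _ l _ hkl => by
    have := congrArg a hkl
    simp only [hindex] at this
    exact Nat.succ_injective this
  refine ⟨(Finset.range K).image fun k => index k, fun θ hθr hθπ => ?_⟩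
  have hfactor : ∀ k ∈ Finset.range K,
      ‖bernoulliCharFun (usageProb a r (index k)) (a (index k) * θ)‖
        ≤ exp (-(exp (-(3 * π)) / 4 * (1 - cos ((k + 1) * θ)))) := fun k hk => by
    have hcast : (a (index k) : ℝ) = k + 1 := by exact_mod_cast hindex k
    have hkK : (k + 1 : ℝ) ≤ K := by exact_mod_cast Finset.mem_range.1 hk
    rw [← hcast] at hkK ⊢
    exact norm_bernoulliCharFun_usageProb_le_exp hr0.le
      ((mul_le_mul_of_nonneg_right hkK hr0.le).trans hKr) θ
  calc _ ≤ ∏ k ∈ Finset.range K, exp (-(exp (-(3 * π)) / 4 * (1 - cos ((k + 1) * θ)))) := by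
        rw [sizeCharFun, norm_prod, Finset.prod_image hinj]
        exact Finset.prod_le_prod (fun _ _ => norm_nonneg _) hfactor
    _ = exp (-(exp (-(3 * π)) / 4 * ∑ k ∈ Finset.range K, (1 - cos ((k + 1) * θ)))) := by
        rw [← exp_sum, Finset.sum_neg_distrib, Finset.mul_sum]
    _ ≤ exp (-(exp (-(3 * π)) / 4 * (π / r))) := by
        gcongr
        exact pi_div_le_sum_one_sub_cos hr0 hθr hθπ (Nat.le_ceil _)
    _ = exp (-(exp (-(3 * π)) * (π / 4) / r)) := by ring_nf

lemma sizeCharFun_eq_sum_powerset (S : Finset ι) (θ : ℝ) :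
    sizeCharFun a r S θ = (exp (-∑ i ∈ S, log (1 + exp (-(a i * r)))) : ℝ) *
      ∑ A ∈ S.powerset, (exp (-((∑ i ∈ A, a i : ℕ) * r)) : ℝ)
        * Complex.exp ((∑ i ∈ A, a i : ℕ) * Complex.I * θ) := by
  have hfactor (i : ι) : bernoulliCharFun (usageProb a r i) (a i * θ)
      = (exp (-log (1 + exp (-(a i * r)))) : ℝ)
        * (1 + Complex.exp (-(a i * r) + a i * Complex.I * θ)) := by
    have hne : (1 + Complex.exp (-(a i * r))) ≠ 0 := by
      exact_mod_cast (by positivity : (1 + exp (-(a i * r))) ≠ 0)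
    rw [exp_neg, exp_log (by positivity), bernoulliCharFun, usageProb, ← Complex.ofReal_one,
      ← Complex.ofReal_sub, ← sigmoid_neg, neg_neg, ← sigmoid_mul_rexp_neg, sigmoid_def,
      Complex.exp_add]
    push_cast
    field_simp
  simp only [sizeCharFun, hfactor, Finset.prod_mul_distrib, Finset.prod_one_add]
  congr 1
  · rw [← Finset.sum_neg_distrib, exp_sum]
    push_cast
    rfl
  · refine Finset.sum_congr rfl fun A _ => ?_
    rw [← Complex.exp_sum, Complex.ofReal_exp, ← Complex.exp_add]
    congr 1
    push_cast
    simp only [Finset.sum_add_distrib, Finset.sum_neg_distrib, Finset.sum_mul]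

lemma integral_sizeCharFun_mul_exp (S : Finset ι) (n : ℕ) :
    ∫ θ in (-π)..π, sizeCharFun a r S θ * Complex.exp ((-(n * θ) : ℝ) * Complex.I)
      = (2 * π * (S.powerset.filter fun A => ∑ i ∈ A, a i = n).card
          * exp (-(n * r + ∑ i ∈ S, log (1 + exp (-(a i * r))))) : ℝ) := by
  set L := ∑ i ∈ S, log (1 + exp (-(a i * r))) with hL
  have hexpand (θ : ℝ) : sizeCharFun a r S θ * Complex.exp ((-(n * θ) : ℝ) * Complex.I)
      = ∑ A ∈ S.powerset, (exp (-((∑ i ∈ A, a i : ℕ) * r + L)) : ℝ)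
        * Complex.exp (((∑ i ∈ A, a i : ℕ) - n : ℤ) * Complex.I * θ) := by
    rw [sizeCharFun_eq_sum_powerset, ← hL, Finset.mul_sum, Finset.sum_mul]
    refine Finset.sum_congr rfl fun A _ => ?_
    simp only [Complex.ofReal_exp, ← Complex.exp_add]
    congr 1
    push_cast
    ring
  have hterm (A : Finset ι) : ∫ θ in (-π)..π, (exp (-((∑ i ∈ A, a i : ℕ) * r + L)) : ℝ)
        * Complex.exp (((∑ i ∈ A, a i : ℕ) - n : ℤ) * Complex.I * θ)
      = if ∑ i ∈ A, a i = n then ((2 * π * exp (-(n * r + L)) : ℝ) : ℂ) else 0 := by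
    rw [intervalIntegral.integral_const_mul, integral_exp_int_mul_I]
    simp only [sub_eq_zero, Nat.cast_inj]
    split_ifs with hA
    · rw [hA]; push_cast; ring
    · rw [mul_zero]
  simp only [hexpand]
  rw [intervalIntegral.integral_finsetSum fun A _ =>
    (by fun_prop : Continuous _).intervalIntegrable _ _]
  simp only [hterm]
  rw [← Finset.sum_filter, Finset.sum_const, nsmul_eq_mul]
  push_cast
  ring

end TiltedMeasure

section SaddlePoint

open Filter Topology

variable {ι : Type*} {a : ι → ℕ} {r : ℝ}

lemma abs_card_mul_exp_sub_sqrt_le {S T U : Finset ι} (hTS : T ⊆ S) (hUS : U ⊆ S)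
    (hr0 : 0 < r) (hrπ : r ≤ π) (hT : ∀ i ∈ T, a i * r ≤ 1)
    (hW : 0 < ∑ i ∈ T, partVariance a r i) {δ : ℝ} (hδ0 : 0 ≤ δ)
    (hU : ∀ θ, r < |θ| → |θ| ≤ π → ‖sizeCharFun a r U θ‖ ≤ δ) (n : ℕ) :
    |2 * π * (S.powerset.filter fun A => ∑ i ∈ A, a i = n).card
          * exp (-(n * r + ∑ i ∈ S, log (1 + exp (-(a i * r)))))
        - √(π / ((∑ i ∈ S, partVariance a r i) / 2))|
      ≤ 2 * π * (|n - ∑ i ∈ S, a i * usageProb a r i| * r + δ)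
        + (2 * exp 1 * (∑ i ∈ S, (a i : ℝ) ^ 3 * exp (-(a i * r))) + 1 / r ^ 3)
          * (1 / (2 / π ^ 2 * ∑ i ∈ T, partVariance a r i) ^ 2) := by
  have hvariance : ∑ i ∈ T, partVariance a r i ≤ ∑ i ∈ S, partVariance a r i :=
    Finset.sum_le_sum_of_subset_of_nonneg hTS fun i _ _ => partVariance_nonneg a r i
  have hdecay : 2 / π ^ 2 * ∑ i ∈ T, partVariance a r i
      ≤ (∑ i ∈ S, partVariance a r i) / 2 := by
    rw [div_eq_inv_mul (∑ i ∈ S, _), ← one_div]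
    exact mul_le_mul two_div_pi_sq_le_half hvariance hW.le one_half_pos.le
  have hminor : ∀ θ, r < |θ| → |θ| ≤ π →
      ‖sizeCharFun a r S θ * Complex.exp ((-(n * θ) : ℝ) * Complex.I)‖ ≤ δ := fun θ hθr hθπ => by
    rw [norm_mul, Complex.norm_exp_ofReal_mul_I, mul_one]
    exact (norm_sizeCharFun_anti hUS θ).trans (hU θ hθr hθπ)
  have hcontinuous : Continuous fun θ : ℝ =>
      sizeCharFun a r S θ * Complex.exp ((-(n * θ) : ℝ) * Complex.I) :=
    (continuous_sizeCharFun S).mul (by fun_prop)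
  have hgauss := norm_integral_sub_gaussian_le hcontinuous (by positivity) hdecay hr0 hrπ
    (by positivity) hδ0 (by positivity)
    (fun θ => norm_sizeCharFun_mul_exp_sub_gaussian_le hTS hT n) hminor
  rwa [integral_sizeCharFun_mul_exp, ← Complex.ofReal_sub, Complex.norm_real,
    Real.norm_eq_abs] at hgauss

lemma finite_setOf_le_of_summable_exp (hsum : Summable fun i => exp (-(a i * r)))
    (hr0 : 0 < r) (n : ℕ) : {i | a i ≤ n}.Finite := by
  have hlarge : ∀ᶠ i in cofinite, exp (-(a i * r)) < exp (-(n * r)) :=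
    hsum.tendsto_cofinite_zero.eventually_lt_const (exp_pos _)
  refine (eventually_cofinite.1 hlarge).subset fun i hi => ?_
  rw [Set.mem_ofPred_eq, not_lt]
  gcongr
  exact hi

lemma card_filter_powerset_eq_subsetSumCount {S : Finset ι} {n : ℕ} (hS : ∀ i, a i ≤ n → i ∈ S) :
    (S.powerset.filter fun A => ∑ i ∈ A, a i = n).card = subsetSumCount a n := by
  rw [subsetSumCount, ← Set.ncard_coe_finset]
  congr 1
  ext A
  simp only [Finset.coe_filter, Finset.mem_powerset, Set.mem_ofPred_eq, and_iff_right_iff_imp]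
  rintro rfl i hi
  exact hS i (Finset.single_le_sum (fun _ _ => Nat.zero_le _) hi)

lemma summable_pow_mul_exp_neg (hr0 : 0 < r) (hsum : Summable fun i => exp (-(a i * (r / 2))))
    (j : ℕ) : Summable fun i => (a i : ℝ) ^ j * exp (-(a i * r)) :=
  (hsum.mul_left (j.factorial * (2 / r) ^ j)).of_nonneg_of_le (fun _ => by positivity)
    fun i => pow_mul_exp_neg_mul_le j (a i).cast_nonneg hr0

lemma tsum_pow_mul_exp_neg_le (hr0 : 0 < r) (hsum : Summable fun i => exp (-(a i * (r / 2))))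
    (j : ℕ) : ∑' i, (a i : ℝ) ^ j * exp (-(a i * r))
      ≤ j.factorial * (2 / r) ^ j * ∑' i, exp (-(a i * (r / 2))) := by
  rw [← tsum_mul_left]
  exact (summable_pow_mul_exp_neg hr0 hsum j).tsum_le_tsum
    (fun i => pow_mul_exp_neg_mul_le j (a i).cast_nonneg hr0) (hsum.mul_left _)

lemma summable_mul_usageProb (hr0 : 0 < r) (hsum : Summable fun i => exp (-(a i * (r / 2)))) :
    Summable fun i => a i * usageProb a r i := by
  refine (summable_pow_mul_exp_neg hr0 hsum 1).of_nonneg_of_le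
    (fun i => mul_nonneg (a i).cast_nonneg (usageProb_nonneg a r i)) fun i => ?_
  rw [pow_one]
  gcongr
  exact usageProb_le_exp_neg a r i

lemma summable_partVariance (hr0 : 0 < r) (hsum : Summable fun i => exp (-(a i * (r / 2)))) :
    Summable (partVariance a r) :=
  (summable_pow_mul_exp_neg hr0 hsum 2).of_nonneg_of_le (partVariance_nonneg a r)
    (partVariance_le a r)

lemma summable_log_one_add_exp_neg (hsum : Summable fun i => exp (-(a i * r))) :
    Summable fun i => log (1 + exp (-(a i * r))) :=
  hsum.of_nonneg_of_le (fun i => log_nonneg (le_add_of_nonneg_right (exp_pos _).le))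
    fun i => (log_le_sub_one_of_pos (by positivity)).trans_eq (add_sub_cancel_left _ _)

theorem abs_subsetSumCount_mul_exp_sub_sqrt_le (hr0 : 0 < r) (hrπ : r ≤ π)
    (hsum : Summable fun i => exp (-(a i * (r / 2)))) {T U : Finset ι}
    (hT : ∀ i ∈ T, a i * r ≤ 1) (hW : 0 < ∑ i ∈ T, partVariance a r i) {δ : ℝ} (hδ0 : 0 ≤ δ)
    (hU : ∀ θ, r < |θ| → |θ| ≤ π → ‖sizeCharFun a r U θ‖ ≤ δ) {n : ℕ}
    (hn : n = ∑' i, a i * usageProb a r i) :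
    |2 * π * subsetSumCount a n * exp (-(n * r + logPartitionFun a r))
        - √(π / ((∑' i, partVariance a r i) / 2))|
      ≤ 2 * π * δ + (2 * exp 1 * (∑' i, (a i : ℝ) ^ 3 * exp (-(a i * r))) + 1 / r ^ 3)
          * (1 / (2 / π ^ 2 * ∑ i ∈ T, partVariance a r i) ^ 2) := by
  classical
  have hsummable : Summable fun i => exp (-(a i * r)) := by
    simpa only [pow_zero, one_mul] using summable_pow_mul_exp_neg hr0 hsum 0
  have hvar_summable := summable_partVariance hr0 hsum
  have hlog : Tendsto (fun S => ∑ i ∈ S, log (1 + exp (-(a i * r)))) atTop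
      (𝓝 (logPartitionFun a r)) := (summable_log_one_add_exp_neg hsummable).hasSum
  have hmean : Tendsto (fun S => ∑ i ∈ S, a i * usageProb a r i) atTop (𝓝 n) :=
    hn ▸ (summable_mul_usageProb hr0 hsum).hasSum
  have hmain : Tendsto (fun S => 2 * π * subsetSumCount a n
        * exp (-(n * r + ∑ i ∈ S, log (1 + exp (-(a i * r)))))
        - √(π / ((∑ i ∈ S, partVariance a r i) / 2))) atTop
      (𝓝 (2 * π * subsetSumCount a n * exp (-(n * r + logPartitionFun a r))
        - √(π / ((∑' i, partVariance a r i) / 2)))) := by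
    refine ((hlog.const_add _).neg.rexp.const_mul _).sub (Tendsto.sqrt ?_)
    refine tendsto_const_nhds.div (Tendsto.div_const hvar_summable.hasSum 2) (half_pos ?_).ne'
    exact hW.trans_le (hvar_summable.sum_le_tsum T fun i _ => partVariance_nonneg a r i)
  have herror : Tendsto (fun S => 2 * π * (|n - ∑ i ∈ S, a i * usageProb a r i| * r + δ)
        + (2 * exp 1 * (∑ i ∈ S, (a i : ℝ) ^ 3 * exp (-(a i * r))) + 1 / r ^ 3)
          * (1 / (2 / π ^ 2 * ∑ i ∈ T, partVariance a r i) ^ 2)) atTop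
      (𝓝 (2 * π * (|(n : ℝ) - n| * r + δ)
        + (2 * exp 1 * (∑' i, (a i : ℝ) ^ 3 * exp (-(a i * r))) + 1 / r ^ 3)
          * (1 / (2 / π ^ 2 * ∑ i ∈ T, partVariance a r i) ^ 2))) :=
    ((((hmean.const_sub _).abs.mul_const r).add_const δ).const_mul _).add
      ((((summable_pow_mul_exp_neg hr0 hsum 3).hasSum.const_mul _).add_const _).mul_const _)
  rw [sub_self, abs_zero, zero_mul, zero_add] at herror
  have hsmall := finite_setOf_le_of_summable_exp hsummable hr0 n
  refine le_of_tendsto_of_tendsto hmain.abs herror ?_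
  filter_upwards [eventually_ge_atTop (T ∪ U ∪ hsmall.toFinset)] with S hS
  simp only [Finset.union_subset_iff] at hS
  rw [← card_filter_powerset_eq_subsetSumCount fun i hi => hS.2 (hsmall.mem_toFinset.2 hi)]
  exact abs_card_mul_exp_sub_sqrt_le hS.1.1 hS.1.2 hr0 hrπ hT hW hδ0 hU n

end SaddlePoint

section LogPartitionDerivatives

open Set

variable {ι : Type*} {a : ι → ℕ} {r : ℝ}

lemma hasDerivAt_log_one_add_exp_neg_mul (i : ι) :
    HasDerivAt (fun t => log (1 + exp (-(a i * t)))) (-(a i * usageProb a r i)) r := by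
  have hexp : HasDerivAt (fun t => exp (-(a i * t))) (exp (-(a i * r)) * -(a i * 1)) r :=
    (((hasDerivAt_id r).const_mul (a i : ℝ)).neg).exp
  refine ((hexp.const_add 1).log (by positivity)).congr_deriv ?_
  rw [usageProb, ← sigmoid_mul_rexp_neg, sigmoid_def]
  ring

lemma hasDerivAt_neg_mul_usageProb (i : ι) :
    HasDerivAt (fun t => -(a i * usageProb a t i)) (partVariance a r i) r := by
  have harg : HasDerivAt (fun t => -((a i : ℝ) * t)) (-(a i * 1)) r :=
    ((hasDerivAt_id r).const_mul (a i : ℝ)).neg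
  refine ((((hasDerivAt_sigmoid _).comp r harg).const_mul (a i : ℝ)).neg).congr_deriv ?_
  rw [partVariance, usageProb]
  ring

lemma usageProb_anti {t : ℝ} (h : t ≤ r) (i : ι) : usageProb a r i ≤ usageProb a t i :=
  sigmoid_le (by gcongr)

lemma pow_mul_exp_neg_anti {t : ℝ} (h : t ≤ r) (i : ι) (j : ℕ) :
    (a i : ℝ) ^ j * exp (-(a i * r)) ≤ a i ^ j * exp (-(a i * t)) := by
  gcongr

lemma hasDerivAt_logPartitionFun (hr0 : 0 < r)
    (hsum : ∀ t > 0, Summable fun i => exp (-(a i * t))) :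
    HasDerivAt (logPartitionFun a) (∑' i, -(a i * usageProb a r i)) r := by
  have hmem : r ∈ Ioi (r / 2) := half_lt_self hr0
  refine hasDerivAt_tsum_of_isPreconnected
    (summable_pow_mul_exp_neg (half_pos hr0) (hsum _ (by positivity)) 1) isOpen_Ioi
    isPreconnected_Ioi (fun i t _ => hasDerivAt_log_one_add_exp_neg_mul i)
    (fun i t ht => ?_) hmem (summable_log_one_add_exp_neg (hsum r hr0)) hmem
  rw [norm_neg, Real.norm_of_nonneg (mul_nonneg (a i).cast_nonneg (usageProb_nonneg a t i))]
  refine le_trans ?_ (pow_mul_exp_neg_anti (le_of_lt ht) i 1)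
  rw [pow_one]
  gcongr
  exact usageProb_le_exp_neg a t i

lemma hasDerivAt_tsum_neg_mul_usageProb (hr0 : 0 < r)
    (hsum : ∀ t > 0, Summable fun i => exp (-(a i * t))) :
    HasDerivAt (fun t => ∑' i, -(a i * usageProb a t i)) (∑' i, partVariance a r i) r := by
  have hmem : r ∈ Ioi (r / 2) := half_lt_self hr0
  refine hasDerivAt_tsum_of_isPreconnected
    (summable_pow_mul_exp_neg (half_pos hr0) (hsum _ (by positivity)) 2) isOpen_Ioi
    isPreconnected_Ioi (fun i t _ => hasDerivAt_neg_mul_usageProb i)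
    (fun i t ht => ?_) hmem (summable_mul_usageProb hr0 (hsum _ (half_pos hr0))).neg hmem
  rw [Real.norm_of_nonneg (partVariance_nonneg a t i)]
  exact (partVariance_le a t i).trans (pow_mul_exp_neg_anti (le_of_lt ht) i 2)

theorem iteratedDeriv_two_logPartitionFun (hr0 : 0 < r)
    (hsum : ∀ t > 0, Summable fun i => exp (-(a i * t))) :
    iteratedDeriv 2 (logPartitionFun a) r = ∑' i, partVariance a r i := by
  have hderiv : deriv (logPartitionFun a)
      =ᶠ[nhds r] fun t => ∑' i, -(a i * usageProb a t i) := by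
    filter_upwards [Ioi_mem_nhds hr0] with t ht
    exact (hasDerivAt_logPartitionFun ht hsum).deriv
  rw [iteratedDeriv_succ, iteratedDeriv_one, hderiv.deriv_eq]
  exact (hasDerivAt_tsum_neg_mul_usageProb hr0 hsum).deriv

end LogPartitionDerivatives

section GrowthExponent

variable {ι : Type*} {a : ι → ℕ} {β r : ℝ}

/-- The parts `a` have growth exponent `β` if `∑ i, e^{-r a i}` is of order `r^{-β}` as `r → 0`,
which means that about `N^β` of them are at most `N`. The lower bound is required of the parts of
size comparable to `1 / r`, and every positive integer has to occur as a part. -/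
structure HasGrowthExponent (a : ι → ℕ) (β : ℝ) : Prop where
  nonneg : 0 ≤ β
  summable_exp : ∀ r > 0, Summable fun i => exp (-(a i * r))
  exists_tsum_exp_le : ∃ C > 0, ∀ r > 0, ∑' i, exp (-(a i * r)) ≤ C * r ^ (-β)
  exists_le_card : ∃ κ > (0 : ℝ), ∃ c > (0 : ℝ), ∃ r₀ > (0 : ℝ), ∀ r, 0 < r → r ≤ r₀ →
    ∃ T : Finset ι, (∀ i ∈ T, κ ≤ a i * r ∧ a i * r ≤ 1) ∧ c * r ^ (-β) ≤ T.card
  exists_eq_succ : ∀ k, ∃ i, a i = k + 1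

lemma HasGrowthExponent.exists_tsum_pow_mul_exp_le (h : HasGrowthExponent a β) (j : ℕ) :
    ∃ C > 0, ∀ r > 0, ∑' i, (a i : ℝ) ^ j * exp (-(a i * r)) ≤ C * r ^ (-β - j) := by
  obtain ⟨C, hC, hle⟩ := h.exists_tsum_exp_le
  refine ⟨j.factorial * 2 ^ j * (C * 2 ^ β), by positivity, fun r hr => ?_⟩
  calc _ ≤ j.factorial * (2 / r) ^ j * ∑' i, exp (-(a i * (r / 2))) :=
        tsum_pow_mul_exp_neg_le hr (h.summable_exp _ (half_pos hr)) j
    _ ≤ j.factorial * (2 / r) ^ j * (C * (r / 2) ^ (-β)) := by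
        gcongr
        exact hle _ (half_pos hr)
    _ = _ := by
        rw [div_rpow hr.le zero_le_two, rpow_neg zero_le_two, rpow_sub hr, rpow_natCast, div_pow]
        field_simp

lemma HasGrowthExponent.exists_le_sum_partVariance (h : HasGrowthExponent a β) :
    ∃ c > (0 : ℝ), ∃ r₀ > (0 : ℝ), ∀ r, 0 < r → r ≤ r₀ → ∃ T : Finset ι, (∀ i ∈ T, a i * r ≤ 1) ∧
      c * r ^ (-β - 2) ≤ ∑ i ∈ T, partVariance a r i := by
  obtain ⟨κ, hκ, c, hc, r₀, hr₀, hparts⟩ := h.exists_le_card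
  refine ⟨c * (κ ^ 2 * (exp (-1) / 4)), by positivity, r₀, hr₀, fun r hr hrr₀ => ?_⟩
  obtain ⟨T, hT, hcard⟩ := hparts r hr hrr₀
  refine ⟨T, fun i hi => (hT i hi).2, ?_⟩
  have hvariance : ∀ i ∈ T, (κ / r) ^ 2 * (exp (-1) / 4) ≤ partVariance a r i := fun i hi => by
    have hprob : exp (-1) / 4 ≤ usageProb a r i * (1 - usageProb a r i) := by
      refine le_trans ?_ (exp_neg_div_four_le_sigmoid_mul (by positivity))
      gcongr
      exact (hT i hi).2
    have hpart : κ / r ≤ a i := (div_le_iff₀ hr).2 (hT i hi).1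
    unfold partVariance
    gcongr
  calc c * (κ ^ 2 * (exp (-1) / 4)) * r ^ (-β - 2)
      = c * r ^ (-β) * ((κ / r) ^ 2 * (exp (-1) / 4)) := by
        rw [rpow_sub hr, rpow_two]
        field_simp
    _ ≤ T.card * ((κ / r) ^ 2 * (exp (-1) / 4)) := by gcongr
    _ ≤ ∑ i ∈ T, partVariance a r i := by
        rw [← nsmul_eq_mul]
        exact Finset.card_nsmul_le_sum T _ _ hvariance

lemma exists_exp_neg_div_le_rpow {c : ℝ} (hc : 0 < c) (t : ℝ) :
    ∃ C > 0, ∀ r, 0 < r → r ≤ 1 → exp (-(c / r)) ≤ C * r ^ t := by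
  set N := ⌈t⌉₊
  refine ⟨N.factorial / c ^ N, by positivity, fun r hr hr1 => ?_⟩
  calc exp (-(c / r)) ≤ ((c / r) ^ N / N.factorial)⁻¹ := by
        rw [exp_neg]
        gcongr
        exact pow_div_factorial_le_exp _ (by positivity) N
    _ = N.factorial / c ^ N * r ^ (N : ℝ) := by
        rw [rpow_natCast, div_pow]
        field_simp
    _ ≤ N.factorial / c ^ N * r ^ t := by
        gcongr ?_ * ?_
        exact rpow_le_rpow_of_exponent_ge hr hr1 (Nat.le_ceil t)

lemma saddlePoint_error_le (hβ : 0 ≤ β) (hr0 : 0 < r) (hr1 : r ≤ 1) {V K W δ CV CK c Cδ : ℝ}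
    (hc : 0 < c) (hδ0 : 0 ≤ δ) (hK0 : 0 ≤ K) (hV : V ≤ CV * r ^ (-β - 2))
    (hK : K ≤ CK * r ^ (-β - 3)) (hW : c * r ^ (-β - 2) ≤ W) (hδ : δ ≤ Cδ * r ^ (β + 1)) :
    √(V / (2 * π)) * (2 * π * δ + (2 * exp 1 * K + 1 / r ^ 3) * (1 / (2 / π ^ 2 * W) ^ 2))
      ≤ √(CV / (2 * π)) * (2 * π * Cδ + (2 * exp 1 * CK + 1) * (1 / (2 / π ^ 2 * c) ^ 2))
        * r ^ (β / 2) := by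
  have hsqrt : √(V / (2 * π)) ≤ √(CV / (2 * π)) * r ^ (-β / 2 - 1) := by
    rw [show r ^ (-β / 2 - 1) = √(r ^ (-β - 2)) by
      rw [sqrt_eq_rpow, ← rpow_mul hr0.le]; ring_nf, ← sqrt_mul' _ (by positivity)]
    refine sqrt_le_sqrt ?_
    rw [div_mul_eq_mul_div]
    gcongr
  have htail : 1 / r ^ 3 ≤ r ^ (-β - 3) := by
    rw [one_div, ← rpow_natCast, ← rpow_neg hr0.le]
    exact rpow_le_rpow_of_exponent_ge hr0 hr1 (by push_cast; linarith)
  have hpowW : 1 / (2 / π ^ 2 * (c * r ^ (-β - 2))) ^ 2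
      = 1 / (2 / π ^ 2 * c) ^ 2 * r ^ (2 * β + 4) := by
    rw [← mul_assoc, mul_pow, ← rpow_mul_natCast hr0.le, one_div, mul_inv, ← rpow_neg hr0.le,
      one_div]
    congr 2
    push_cast
    ring
  calc _ ≤ √(CV / (2 * π)) * r ^ (-β / 2 - 1) * (2 * π * (Cδ * r ^ (β + 1))
        + (2 * exp 1 * (CK * r ^ (-β - 3)) + r ^ (-β - 3))
          * (1 / (2 / π ^ 2 * (c * r ^ (-β - 2))) ^ 2)) := by
        have hCK : 0 ≤ CK * r ^ (-β - 3) := hK0.trans hK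
        gcongr
    _ = √(CV / (2 * π)) * (2 * π * Cδ * (r ^ (-β / 2 - 1) * r ^ (β + 1))
        + (2 * exp 1 * CK + 1) * (1 / (2 / π ^ 2 * c) ^ 2)
          * (r ^ (-β / 2 - 1) * (r ^ (-β - 3) * r ^ (2 * β + 4)))) := by rw [hpowW]; ring
    _ = _ := by
        rw [← rpow_add hr0, ← rpow_add hr0, ← rpow_add hr0]
        ring_nf

lemma exists_eq_div_mul_one_add_of_abs_sub_sqrt_le {N L V D : ℝ} (hV : 0 < V)
    (h : |2 * π * N * exp (-L) - √(π / (V / 2))| ≤ D) :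
    ∃ E : ℝ, N = exp L / (√(2 * π) * √V) * (1 + E) ∧ |E| ≤ √(V / (2 * π)) * D := by
  have hroot : √(V / (2 * π)) * √(π / (V / 2)) = 1 := by
    rw [← sqrt_mul (by positivity), sqrt_eq_one]
    field_simp
  refine ⟨√(V / (2 * π)) * (2 * π * N * exp (-L) - √(π / (V / 2))), ?_, ?_⟩
  · rw [mul_sub, hroot, add_sub_cancel, sqrt_div hV.le, exp_neg]
    have := mul_self_sqrt (two_pi_pos).le
    field_simp
    linear_combination N * this
  · rw [abs_mul, abs_of_nonneg (sqrt_nonneg _)]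
    gcongr

lemma HasGrowthExponent.lt_of_tsum_mul_usageProb_lt (h : HasGrowthExponent a β) {ε : ℝ}
    (hε : 0 < ε) (hr0 : 0 < r)
    (hlt : ∑' i, a i * usageProb a ε i < ∑' i, a i * usageProb a r i) : r < ε := by
  contrapose! hlt
  refine (summable_mul_usageProb hr0 (h.summable_exp _ (half_pos hr0))).tsum_le_tsum (fun i => ?_)
    (summable_mul_usageProb hε (h.summable_exp _ (half_pos hε)))
  gcongr
  exact usageProb_anti hlt i

theorem HasGrowthExponent.exists_abs_subsetSumCount_sub_le (h : HasGrowthExponent a β) :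
    ∃ C > 0, ∃ r₀ > 0, ∀ r, 0 < r → r ≤ r₀ → ∀ n : ℕ, n = ∑' i, a i * usageProb a r i →
      ∃ E : ℝ, subsetSumCount a n = exp (n * r + logPartitionFun a r)
        / (√(2 * π) * √(∑' i, partVariance a r i)) * (1 + E) ∧ |E| ≤ C * r ^ (β / 2) := by
  obtain ⟨CV, hCV, hV⟩ := h.exists_tsum_pow_mul_exp_le 2
  obtain ⟨CK, hCK, hK⟩ := h.exists_tsum_pow_mul_exp_le 3
  obtain ⟨c, hc, r₀, hr₀, hW⟩ := h.exists_le_sum_partVariance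
  obtain ⟨Cδ, hCδ, hδ⟩ :=
    exists_exp_neg_div_le_rpow (c := exp (-(3 * π)) * (π / 4)) (by positivity) (β + 1)
  refine ⟨√(CV / (2 * π)) * (2 * π * Cδ + (2 * exp 1 * CK + 1) * (1 / (2 / π ^ 2 * c) ^ 2)),
    by positivity, min r₀ 1, by positivity, fun r hr hrle n hn => ?_⟩
  have hr1 : r ≤ 1 := hrle.trans (min_le_right _ _)
  have hrπ : r ≤ π := by linarith [pi_gt_three]
  have hsum := h.summable_exp _ (half_pos hr)
  have hvar := summable_partVariance hr hsum
  obtain ⟨T, hT, hWT⟩ := hW r hr (hrle.trans (min_le_left _ _))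
  have hWpos : 0 < ∑ i ∈ T, partVariance a r i := lt_of_lt_of_le (by positivity) hWT
  obtain ⟨U, hU⟩ := exists_norm_sizeCharFun_le_exp hr hrπ h.exists_eq_succ
  have hcount := abs_subsetSumCount_mul_exp_sub_sqrt_le hr hrπ hsum hT hWpos (exp_pos _).le hU hn
  obtain ⟨E, hE, hEle⟩ := exists_eq_div_mul_one_add_of_abs_sub_sqrt_le
    (hWpos.trans_le (hvar.sum_le_tsum T fun i _ => partVariance_nonneg a r i)) hcount
  refine ⟨E, hE, hEle.trans (saddlePoint_error_le h.nonneg hr hr1 hc (exp_pos _).le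
    (tsum_nonneg fun i => by positivity) ?_ (hK r hr) hWT (hδ r hr hr1))⟩
  exact (hvar.tsum_le_tsum (partVariance_le a r)
    (summable_pow_mul_exp_neg hr hsum 2)).trans (hV r hr)

theorem HasGrowthExponent.exists_subsetSumCount_eq (h : HasGrowthExponent a β) {s : ℝ}
    (hs : s ≤ β / 2) :
    ∃ C > 0, ∃ n₀ : ℕ, ∀ n ≥ n₀, ∀ r > 0, n = ∑' i, a i * usageProb a r i →
      ∃ E : ℝ, subsetSumCount a n = exp (n * r + logPartitionFun a r)
        / (√(2 * π) * √(∑' i, partVariance a r i)) * (1 + E) ∧ |E| ≤ C * r ^ s := by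
  obtain ⟨C, hC, r₀, hr₀, hcount⟩ := h.exists_abs_subsetSumCount_sub_le
  obtain ⟨n₀, hn₀⟩ := exists_nat_gt (∑' i, a i * usageProb a (min r₀ 1) i)
  refine ⟨C, hC, n₀, fun n hn r hr hmean => ?_⟩
  have hrlt : r < min r₀ 1 := h.lt_of_tsum_mul_usageProb_lt (by positivity) hr
    (hmean ▸ hn₀.trans_le (by exact_mod_cast hn))
  obtain ⟨E, hE, hEle⟩ := hcount r hr (hrlt.le.trans (min_le_left _ _)) n hmean
  refine ⟨E, hE, hEle.trans ?_⟩
  gcongr ?_ * ?_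
  exact rpow_le_rpow_of_exponent_ge hr (hrlt.le.trans (min_le_right _ _)) hs

end GrowthExponent

section FloorPowers

open Set MeasureTheory

/-- The part `⌊m ^ α⌋` contributed by the positive integer `m`. -/
noncomputable def floorRpow (α : ℝ) (m : ℕ+) : ℕ := ⌊(m : ℝ) ^ α⌋₊

variable {α : ℝ}

lemma floorRpow_le (m : ℕ+) : (floorRpow α m : ℝ) ≤ (m : ℝ) ^ α :=
  Nat.floor_le (by positivity)

lemma rpow_div_two_le_floorRpow (hα : 0 ≤ α) (m : ℕ+) : (m : ℝ) ^ α / 2 ≤ floorRpow α m := by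
  have hone : 1 ≤ floorRpow α m :=
    (Nat.one_le_floor_iff _).2 (one_le_rpow (by exact_mod_cast m.pos) hα)
  have hone' : (1 : ℝ) ≤ floorRpow α m := by exact_mod_cast hone
  have hlt : (m : ℝ) ^ α < floorRpow α m + 1 := Nat.lt_floor_add_one _
  linarith

lemma exists_floorRpow_eq_succ (hα0 : 0 < α) (hα1 : α ≤ 1) (k : ℕ) :
    ∃ m, floorRpow α m = k + 1 := by
  set x : ℝ := ((k + 1 : ℕ) : ℝ) ^ α⁻¹
  have hx0 : 0 < x := by positivity
  refine ⟨⟨⌈x⌉₊, Nat.ceil_pos.2 hx0⟩, (Nat.floor_eq_iff (by positivity)).2 ⟨?_, ?_⟩⟩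
  · rw [PNat.mk_coe, ← rpow_inv_le_iff_of_pos (by positivity) (by positivity) hα0]
    exact Nat.le_ceil x
  · rw [PNat.mk_coe, ← lt_rpow_inv_iff_of_pos (by positivity) (by positivity) hα0]
    calc (⌈x⌉₊ : ℝ) < x + 1 := Nat.ceil_lt_add_one hx0.le
      _ ≤ (((k + 1 : ℕ) : ℝ) + 1) ^ α⁻¹ := by
        simpa only [one_rpow] using
          add_rpow_le_rpow_add (Nat.cast_nonneg _) zero_le_one ((one_le_inv₀ hα0).2 hα1)

lemma antitoneOn_exp_neg_mul_rpow (hα : 0 ≤ α) {b : ℝ} (hb : 0 ≤ b) :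
    AntitoneOn (fun x : ℝ => exp (-b * x ^ α)) (Ici 0) := fun x hx y _ hxy => by
  simp only [neg_mul]
  have := rpow_le_rpow hx hxy hα
  gcongr

lemma integrableOn_exp_neg_mul_rpow (hα : 0 < α) {b : ℝ} (hb : 0 < b) :
    IntegrableOn (fun x : ℝ => exp (-b * x ^ α)) (Ioi 0) := by
  simpa using integrableOn_rpow_mul_exp_neg_mul_rpow (s := 0) (by norm_num) hα hb

lemma summable_pnat_exp_neg_mul_rpow (hα : 0 < α) {b : ℝ} (hb : 0 < b) :
    Summable fun m : ℕ+ => exp (-b * (m : ℝ) ^ α) := by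
  have hnat := (antitoneOn_exp_neg_mul_rpow hα.le hb.le).summable_of_integrableOn_Ioi_zero
    (integrableOn_exp_neg_mul_rpow hα hb) fun _ _ => (exp_pos _).le
  exact hnat.comp_injective PNat.coe_injective

lemma tsum_pnat_exp_neg_mul_rpow_le (hα : 0 < α) {b : ℝ} (hb : 0 < b) :
    ∑' m : ℕ+, exp (-b * (m : ℝ) ^ α) ≤ Gamma (1 / α + 1) * b ^ (-(1 / α)) := by
  rw [tsum_pnat_eq_tsum_succ (f := fun m : ℕ => exp (-b * (m : ℝ) ^ α))]
  refine ((antitoneOn_exp_neg_mul_rpow hα.le hb.le).tsum_add_one_le_integral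
    (integrableOn_exp_neg_mul_rpow hα hb) fun _ _ => (exp_pos _).le).trans_eq ?_
  rw [integral_exp_neg_mul_rpow hα hb, neg_div, mul_comm]

lemma exp_neg_floorRpow_mul_le (hα : 0 ≤ α) {r : ℝ} (hr : 0 ≤ r) (m : ℕ+) :
    exp (-(floorRpow α m * r)) ≤ exp (-(r / 2) * (m : ℝ) ^ α) := by
  have := mul_le_mul_of_nonneg_right (rpow_div_two_le_floorRpow hα m) hr
  rw [exp_le_exp]
  linarith

lemma summable_exp_neg_floorRpow_mul (hα : 0 < α) {r : ℝ} (hr : 0 < r) :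
    Summable fun m => exp (-(floorRpow α m * r)) :=
  (summable_pnat_exp_neg_mul_rpow hα (half_pos hr)).of_nonneg_of_le (fun _ => (exp_pos _).le)
    (exp_neg_floorRpow_mul_le hα.le hr.le)

lemma tsum_exp_neg_floorRpow_mul_le (hα : 0 < α) {r : ℝ} (hr : 0 < r) :
    ∑' m, exp (-(floorRpow α m * r)) ≤ Gamma (1 / α + 1) * 2 ^ (1 / α) * r ^ (-(1 / α)) :=
  calc _ ≤ ∑' m : ℕ+, exp (-(r / 2) * (m : ℝ) ^ α) :=
        (summable_exp_neg_floorRpow_mul hα hr).tsum_le_tsum (exp_neg_floorRpow_mul_le hα.le hr.le)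
          (summable_pnat_exp_neg_mul_rpow hα (half_pos hr))
    _ ≤ Gamma (1 / α + 1) * (r / 2) ^ (-(1 / α)) := tsum_pnat_exp_neg_mul_rpow_le hα (half_pos hr)
    _ = _ := by
        rw [div_rpow hr.le zero_le_two, rpow_neg zero_le_two]
        field_simp

lemma exists_finset_pnat_half_le {R : ℝ} (hR : 4 ≤ R) :
    ∃ T : Finset ℕ+, (∀ m ∈ T, R / 2 ≤ m ∧ m ≤ R) ∧ R / 4 ≤ T.card := by
  obtain ⟨k, hk⟩ : ∃ k : ℕ+, (k : ℕ) = ⌈R / 2⌉₊ :=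
    CanLift.prf _ (Nat.ceil_pos.2 (by linarith))
  obtain ⟨l, hl⟩ : ∃ l : ℕ+, (l : ℕ) = ⌊R⌋₊ := CanLift.prf _ (Nat.floor_pos.2 (by linarith))
  refine ⟨Finset.Icc k l, fun m hm => ?_, ?_⟩
  · rw [Finset.mem_Icc, ← PNat.coe_le_coe, ← PNat.coe_le_coe, hk, hl] at hm
    exact ⟨Nat.ceil_le.1 hm.1, (Nat.le_floor_iff' m.ne_zero).1 hm.2⟩
  · have hceil : (⌈R / 2⌉₊ : ℝ) < R / 2 + 1 := Nat.ceil_lt_add_one (by linarith)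
    have hfloor : R < ⌊R⌋₊ + 1 := Nat.lt_floor_add_one R
    have hcard : ⌊R⌋₊ + 1 ≤ (Finset.Icc k l).card + ⌈R / 2⌉₊ := by
      rw [PNat.card_Icc, hk, hl]
      exact le_tsub_add
    have hcard' : (⌊R⌋₊ + 1 : ℝ) ≤ (Finset.Icc k l).card + ⌈R / 2⌉₊ := by exact_mod_cast hcard
    linarith

lemma exists_finset_floorRpow_mul_mem_Icc (hα : 0 < α) {r : ℝ} (hr0 : 0 < r)
    (hr : r ≤ (1 / 4) ^ α) : ∃ T : Finset ℕ+,
      (∀ m ∈ T, 1 / (2 * 2 ^ α) ≤ floorRpow α m * r ∧ floorRpow α m * r ≤ 1) ∧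
        1 / 4 * r ^ (-(1 / α)) ≤ T.card := by
  set R := r ^ (-(1 / α)) with hR
  have hR0 : 0 < R := by positivity
  have hRα : R ^ α = r⁻¹ := by
    rw [hR, ← rpow_mul hr0.le, neg_mul, one_div_mul_cancel hα.ne', rpow_neg_one]
  have hR4 : 4 ≤ R := by
    rw [← rpow_le_rpow_iff zero_le_four hR0.le hα, hRα]
    rw [one_div, inv_rpow zero_le_four] at hr
    exact le_inv_of_le_inv₀ hr0 hr
  obtain ⟨T, hT, hcard⟩ := exists_finset_pnat_half_le hR4
  refine ⟨T, fun m hm => ⟨?_, ?_⟩, by linarith⟩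
  · have hlower : (R / 2) ^ α ≤ (m : ℝ) ^ α := rpow_le_rpow (by positivity) (hT m hm).1 hα.le
    rw [div_rpow hR0.le zero_le_two, hRα] at hlower
    calc 1 / (2 * 2 ^ α) = r⁻¹ / 2 ^ α / 2 * r := by field_simp
      _ ≤ (m : ℝ) ^ α / 2 * r := by gcongr
      _ ≤ floorRpow α m * r := by
        gcongr
        exact rpow_div_two_le_floorRpow hα.le m
  · calc floorRpow α m * r ≤ R ^ α * r := by
          gcongr
          exact (floorRpow_le m).trans (rpow_le_rpow (by positivity) (hT m hm).2 hα.le)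
      _ = 1 := by rw [hRα, inv_mul_cancel₀ hr0.ne']

theorem hasGrowthExponent_floorRpow (hα0 : 0 < α) (hα1 : α ≤ 1) :
    HasGrowthExponent (floorRpow α) (1 / α) where
  nonneg := by positivity
  summable_exp _ hr := summable_exp_neg_floorRpow_mul hα0 hr
  exists_tsum_exp_le := ⟨Gamma (1 / α + 1) * 2 ^ (1 / α), by positivity,
    fun _ hr => tsum_exp_neg_floorRpow_mul_le hα0 hr⟩
  exists_le_card := ⟨1 / (2 * 2 ^ α), by positivity, 1 / 4, by norm_num, (1 / 4) ^ α,
    by positivity, fun _ => exists_finset_floorRpow_mul_mem_Icc hα0⟩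
  exists_eq_succ := exists_floorRpow_eq_succ hα0 hα1

end FloorPowers

section RestrictedPartitions

open Set

variable {α : ℝ}

lemma coe_floorRpow (m : ℕ+) : (floorRpow α m : ℤ) = ⌊(m : ℝ) ^ α⌋ :=
  Int.natCast_floor_eq_floor (by positivity)

lemma g_eq_card_preimage_floorRpow (α : ℝ) (k : ℕ) : g α k = Nat.card (floorRpow α ⁻¹' {k}) := by
  have himage : {n : ℕ | 1 ≤ n ∧ ⌊(n : ℝ) ^ α⌋ = (k : ℤ)} = (↑) '' (floorRpow α ⁻¹' {k}) := by
    ext n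
    constructor
    · rintro ⟨hn, hk⟩
      exact ⟨⟨n, hn⟩, by exact_mod_cast (coe_floorRpow ⟨n, hn⟩).trans hk, rfl⟩
    · rintro ⟨m, hm, rfl⟩
      exact ⟨m.pos, by rw [← coe_floorRpow, show floorRpow α m = k from hm]⟩
  rw [g, himage, ncard_image_of_injective _ PNat.coe_injective, Nat.card_coe_set_eq]

lemma tsum_g_mul {F : ℕ → ℝ} (hF : Summable fun m => F (floorRpow α m)) :
    ∑' k, g α k * F k = ∑' m, F (floorRpow α m) := by
  rw [← (hF.hasSum.tsum_fiberwise (floorRpow α)).tsum_eq]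
  refine tsum_congr fun k => ?_
  have hfiber (m : floorRpow α ⁻¹' {k}) : F (floorRpow α m) = F k := congrArg F m.2
  rw [tsum_congr hfiber, tsum_const, g_eq_card_preimage_floorRpow, nsmul_eq_mul]

lemma qn_eq_subsetSumCount_floorRpow (α : ℝ) (n : ℕ) :
    qn α n = subsetSumCount (floorRpow α) n := by
  have hsum (A : Finset ℕ+) : ∑ a ∈ A.image (↑), ⌊((a : ℕ) : ℝ) ^ α⌋ = (n : ℤ) ↔
      ∑ m ∈ A, floorRpow α m = n := by
    rw [Finset.sum_image PNat.coe_injective.injOn, ← Nat.cast_inj (R := ℤ), Nat.cast_sum]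
    simp only [coe_floorRpow]
  have himage : {A : Finset ℕ | (∀ a ∈ A, 1 ≤ a) ∧ ∑ a ∈ A, ⌊(a : ℝ) ^ α⌋ = (n : ℤ)}
      = Finset.image (↑) '' {A : Finset ℕ+ | ∑ m ∈ A, floorRpow α m = n} := by
    ext A
    constructor
    · rintro ⟨hA, hn⟩
      lift A to Finset ℕ+ using hA
      exact ⟨A, (hsum A).1 hn, rfl⟩
    · rintro ⟨A, hA, rfl⟩
      exact ⟨Finset.forall_mem_image.2 fun m _ => m.pos, (hsum A).2 hA⟩
  rw [qn, himage, ncard_image_of_injective _ (Finset.image_injective PNat.coe_injective),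
    subsetSumCount]

lemma f_eq_logPartitionFun (hα : 0 < α) {r : ℝ} (hr : 0 < r) :
    f α r 0 = logPartitionFun (floorRpow α) r := by
  simp only [f, zero_sub]
  exact tsum_g_mul (summable_log_one_add_exp_neg (summable_exp_neg_floorRpow_mul hα hr))

lemma tsum_mul_g_div_eq (hα : 0 < α) {r : ℝ} (hr : 0 < r) :
    ∑' k : ℕ, (k : ℝ) * g α k / (exp (k * r) + 1)
      = ∑' m, floorRpow α m * usageProb (floorRpow α) r m := by
  refine Eq.trans (tsum_congr fun k => ?_) (tsum_g_mul (F := fun k => k * sigmoid (-(k * r)))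
    (summable_mul_usageProb hr (summable_exp_neg_floorRpow_mul hα (half_pos hr))))
  rw [sigmoid_def, neg_neg]
  ring

lemma fpartial_two_zero_eq_tsum_partVariance (hα : 0 < α) {r : ℝ} (hr : 0 < r) :
    fpartial α 2 0 r 0 = ∑' m, partVariance (floorRpow α) r m := by
  have heq : (fun t => f α t 0) =ᶠ[nhds r] logPartitionFun (floorRpow α) := by
    filter_upwards [Ioi_mem_nhds hr] with t ht using f_eq_logPartitionFun hα ht
  rw [← iteratedDeriv_two_logPartitionFun hr fun t ht => summable_exp_neg_floorRpow_mul hα ht,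
    ← heq.iteratedDeriv_eq 2]
  simp only [fpartial, iteratedDeriv_zero, f]

end RestrictedPartitions

theorem qn_asymptotic_general {α s : ℝ} (hα0 : 0 < α) (hα1 : α ≤ 1) (hs : s ≤ 1 / α / 2) :
    ∃ C > (0:ℝ), ∃ n₀ : ℕ, ∀ n : ℕ, n₀ ≤ n → ∀ r : ℝ, 0 < r →
      (n : ℝ) = (∑' k : ℕ, (k : ℝ) * g α k / (Real.exp (k * r) + 1)) →
      ∃ E : ℝ,
        (qn α n : ℝ)
          = Real.exp ((n : ℝ) * r + f α r 0)
            / (Real.sqrt (2 * π) * Real.sqrt (fpartial α 2 0 r 0)) * (1 + E) ∧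
        |E| ≤ C * r ^ s := by
  obtain ⟨C, hC, n₀, hcount⟩ :=
    (hasGrowthExponent_floorRpow hα0 hα1).exists_subsetSumCount_eq hs
  refine ⟨C, hC, n₀, fun n hn r hr hmean => ?_⟩
  rw [tsum_mul_g_div_eq hα0 hr] at hmean
  rw [qn_eq_subsetSumCount_floorRpow, f_eq_logPartitionFun hα0 hr,
    fpartial_two_zero_eq_tsum_partVariance hα0 hr]
  exact hcount n hn r hr hmean

/-- Asymptotic formula for `q(n)` (Equation (11)): if `r = r_n > 0` satisfies
`n = ∑_{k≥1} k g(k)/(e^{kr}+1)`, then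
`q(n) = e^{nr+f(r,0)}/(√(2π) B)·(1 + O(r^{2β/7}))` with `B² = f''_{20}(r,0)`. -/
theorem qn_asymptotic (α β : ℝ) (hα : 0 < α ∧ α < 1) (hβ : β = 1 / α) :
    ∃ C > (0:ℝ), ∃ n₀ : ℕ, ∀ n : ℕ, n₀ ≤ n → ∀ r : ℝ, 0 < r →
      (n : ℝ) = (∑' k : ℕ, (k : ℝ) * g α k / (Real.exp (k * r) + 1)) →
      ∃ E : ℝ,
        (qn α n : ℝ)
          = Real.exp ((n : ℝ) * r + f α r 0)
            / (Real.sqrt (2 * π) * Real.sqrt (fpartial α 2 0 r 0)) * (1 + E) ∧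
        |E| ≤ C * r ^ (2 * β / 7) := by
  subst hβ
  exact qn_asymptotic_general hα.1 hα.2.le (by linarith [one_div_pos.2 hα.1])
end

section
/- Let 0<α<1 and β:=1/α. There exist constants γ₁,γ₂>0 depending only on β such that for every real s>β one has γ₁·ζ(s−β+1) ≤ ∑_{k≥1} g(k)·k^{−s} ≤ γ₂·ζ(s−β+1), where ζ is the Riemann zeta function and the Dirichlet series D(s)=∑_{k≥1} g(k)·k^{−s} converges for s>β. -/
open Real

/-!
Since `⌊n ^ α⌋ = k` means `k ^ β ≤ n < (k + 1) ^ β`, the number `g α k` differs by less than one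
from the gap `(k + 1) ^ β - k ^ β`. By convexity of `x ↦ x ^ β` this gap lies between its tangent
estimates `β * k ^ (β - 1)` and `β * (k + 1) ^ (β - 1)`, and it is at least one, so rounding costs
at most a factor two. Hence `g α k` is of exact order `k ^ (β - 1)`, and comparing with
`∑ k ^ (β - 1) * k ^ (-s) = ζ(s - β + 1)` term by term gives constants independent of `s`.
-/

section CeilGap

variable {R : Type*} [Field R] [LinearOrder R] [IsStrictOrderedRing R] [FloorSemiring R] {x y : R}

lemma half_sub_le_ceil_sub_ceil (hx : 0 ≤ x) (hxy : x + 1 ≤ y) :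
    (y - x) / 2 ≤ (⌈y⌉₊ : R) - ⌈x⌉₊ := by
  have hx_ceil : (⌈x⌉₊ : R) < x + 1 := Nat.ceil_lt_add_one hx
  have hy_ceil : y ≤ ⌈y⌉₊ := Nat.le_ceil y
  have hone : (⌈x⌉₊ : R) + 1 ≤ ⌈y⌉₊ := mod_cast hx_ceil.trans_le (hxy.trans hy_ceil)
  linarith

lemma ceil_sub_ceil_le_two_mul_sub (hy : 0 ≤ y) (hxy : x + 1 ≤ y) :
    (⌈y⌉₊ : R) - ⌈x⌉₊ ≤ 2 * (y - x) := by
  linarith [Nat.le_ceil x, Nat.ceil_lt_add_one hy]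

end CeilGap

section RpowGap

variable {p x y : ℝ}

lemma rpow_add_mul_sub_le_rpow (hp : 1 ≤ p) (hx : 0 < x) (hy : 0 ≤ y) :
    x ^ p + p * x ^ (p - 1) * (y - x) ≤ y ^ p := by
  have hdiv : 0 ≤ y / x := div_nonneg hy hx.le
  have bernoulli : 1 + p * (y / x - 1) ≤ (y / x) ^ p := by
    simpa using one_add_mul_self_le_rpow_one_add (s := y / x - 1) (by linarith) hp
  calc x ^ p + p * x ^ (p - 1) * (y - x) = x ^ p * (1 + p * (y / x - 1)) := by
        rw [rpow_sub_one hx.ne']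
        field_simp
    _ ≤ x ^ p * (y / x) ^ p := by gcongr
    _ = y ^ p := by rw [← mul_rpow hx.le hdiv, mul_div_cancel₀ _ hx.ne']

lemma mul_rpow_sub_one_le_add_one_rpow_sub_rpow (hp : 1 ≤ p) (hx : 0 < x) :
    p * x ^ (p - 1) ≤ (x + 1) ^ p - x ^ p := by
  linarith [rpow_add_mul_sub_le_rpow hp hx (y := x + 1) (by positivity)]

lemma add_one_rpow_sub_rpow_le_mul_rpow_sub_one (hp : 1 ≤ p) (hx : 0 ≤ x) :
    (x + 1) ^ p - x ^ p ≤ p * (x + 1) ^ (p - 1) := by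
  linarith [rpow_add_mul_sub_le_rpow hp (x := x + 1) (by positivity) hx]

lemma rpow_add_one_le_add_one_rpow (hp : 1 ≤ p) (hx : 0 ≤ x) : x ^ p + 1 ≤ (x + 1) ^ p := by
  simpa using add_rpow_le_rpow_add hx zero_le_one hp

end RpowGap

section FloorRpowCount

variable {α : ℝ} {k : ℕ}

lemma floor_natCast_rpow_eq_iff_mem_Ico (hα : 0 < α) (n : ℕ) :
    ⌊(n : ℝ) ^ α⌋ = (k : ℤ) ↔ n ∈ Set.Ico ⌈(k : ℝ) ^ α⁻¹⌉₊ ⌈((k : ℝ) + 1) ^ α⁻¹⌉₊ := by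
  rw [Int.floor_eq_iff, Int.cast_natCast, Set.mem_Ico, Nat.ceil_le, Nat.lt_ceil,
    rpow_inv_le_iff_of_pos k.cast_nonneg n.cast_nonneg hα,
    lt_rpow_inv_iff_of_pos n.cast_nonneg (by positivity) hα]

lemma g_eq_ceil_sub_ceil (hα : 0 < α) (hk : k ≠ 0) :
    g α k = ⌈((k : ℝ) + 1) ^ α⁻¹⌉₊ - ⌈(k : ℝ) ^ α⁻¹⌉₊ := by
  have hceil : 1 ≤ ⌈(k : ℝ) ^ α⁻¹⌉₊ := Nat.one_le_ceil_iff.2 (by positivity)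
  have hset : {n : ℕ | 1 ≤ n ∧ ⌊(n : ℝ) ^ α⌋ = (k : ℤ)} =
      Set.Ico ⌈(k : ℝ) ^ α⁻¹⌉₊ ⌈((k : ℝ) + 1) ^ α⁻¹⌉₊ := by
    ext n
    rw [Set.mem_ofPred_eq, floor_natCast_rpow_eq_iff_mem_Ico hα]
    exact and_iff_right_of_imp fun hn => hceil.trans hn.1
  rw [g, hset, ← Finset.coe_Ico, Set.ncard_coe_finset, Nat.card_Ico]

lemma natCast_g_eq_ceil_sub_ceil (hα : 0 < α) (hk : k ≠ 0) :
    (g α k : ℝ) = ⌈((k : ℝ) + 1) ^ α⁻¹⌉₊ - ⌈(k : ℝ) ^ α⁻¹⌉₊ := by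
  rw [g_eq_ceil_sub_ceil hα hk, Nat.cast_sub]
  gcongr
  linarith

lemma mul_rpow_le_g (hα₀ : 0 < α) (hα₁ : α ≤ 1) (hk : k ≠ 0) :
    α⁻¹ / 2 * (k : ℝ) ^ (α⁻¹ - 1) ≤ g α k := by
  have hp : 1 ≤ α⁻¹ := (one_le_inv₀ hα₀).2 hα₁
  calc α⁻¹ / 2 * (k : ℝ) ^ (α⁻¹ - 1) = α⁻¹ * (k : ℝ) ^ (α⁻¹ - 1) / 2 := by ring
    _ ≤ (((k : ℝ) + 1) ^ α⁻¹ - (k : ℝ) ^ α⁻¹) / 2 := by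
        gcongr
        exact mul_rpow_sub_one_le_add_one_rpow_sub_rpow hp (by positivity)
    _ ≤ ⌈((k : ℝ) + 1) ^ α⁻¹⌉₊ - ⌈(k : ℝ) ^ α⁻¹⌉₊ :=
        half_sub_le_ceil_sub_ceil (by positivity) (rpow_add_one_le_add_one_rpow hp k.cast_nonneg)
    _ = g α k := (natCast_g_eq_ceil_sub_ceil hα₀ hk).symm

lemma g_le_mul_rpow (hα₀ : 0 < α) (hα₁ : α ≤ 1) (hk : k ≠ 0) :
    (g α k : ℝ) ≤ α⁻¹ * 2 ^ α⁻¹ * (k : ℝ) ^ (α⁻¹ - 1) := by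
  have hp : 1 ≤ α⁻¹ := (one_le_inv₀ hα₀).2 hα₁
  have hk₁ : (1 : ℝ) ≤ k := mod_cast Nat.one_le_iff_ne_zero.2 hk
  calc (g α k : ℝ) = ⌈((k : ℝ) + 1) ^ α⁻¹⌉₊ - ⌈(k : ℝ) ^ α⁻¹⌉₊ :=
        natCast_g_eq_ceil_sub_ceil hα₀ hk
    _ ≤ 2 * (((k : ℝ) + 1) ^ α⁻¹ - (k : ℝ) ^ α⁻¹) :=
        ceil_sub_ceil_le_two_mul_sub (by positivity) (rpow_add_one_le_add_one_rpow hp k.cast_nonneg)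
    _ ≤ 2 * (α⁻¹ * ((k : ℝ) + 1) ^ (α⁻¹ - 1)) := by
        gcongr
        exact add_one_rpow_sub_rpow_le_mul_rpow_sub_one hp k.cast_nonneg
    _ ≤ 2 * (α⁻¹ * (2 * (k : ℝ)) ^ (α⁻¹ - 1)) := by
        gcongr
        linarith
    _ = α⁻¹ * 2 ^ α⁻¹ * (k : ℝ) ^ (α⁻¹ - 1) := by
        rw [mul_rpow zero_le_two k.cast_nonneg, rpow_sub_one two_ne_zero]
        ring

end FloorRpowCount

section DirichletSeries

variable {s t : ℝ}

lemma hasSum_natCast_rpow_neg (ht : 1 < t) :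
    HasSum (fun k : ℕ => (k : ℝ) ^ (-t)) (riemannZeta t).re := by
  have hsum : Summable fun k : ℕ => (k : ℝ) ^ (-t) := summable_nat_rpow.2 (neg_lt_neg ht)
  have hzeta : riemannZeta t = ((∑' k : ℕ, (k : ℝ) ^ (-t) : ℝ) : ℂ) := by
    rw [zeta_eq_tsum_one_div_nat_cpow (by simpa using ht), Complex.ofReal_tsum]
    refine tsum_congr fun k => ?_
    rw [rpow_neg k.cast_nonneg, Complex.ofReal_inv, Complex.ofReal_cpow k.cast_nonneg,
      Complex.ofReal_natCast, one_div]
  rw [hzeta, Complex.ofReal_re]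
  exact hsum.hasSum

lemma hasSum_natCast_rpow_mul_rpow_neg (hs : s ≠ 0) (hts : t + 1 < s) :
    HasSum (fun k : ℕ => (k : ℝ) ^ t * (k : ℝ) ^ (-s)) (riemannZeta ((s - t : ℝ) : ℂ)).re := by
  convert hasSum_natCast_rpow_neg (lt_sub_iff_add_lt'.2 hts) using 2 with k
  rcases eq_or_ne k 0 with rfl | hk
  · rw [Nat.cast_zero, zero_rpow (neg_ne_zero.2 hs), mul_zero, zero_rpow (by linarith)]
  · rw [← rpow_add (by positivity), neg_sub, sub_eq_add_neg]

lemma mul_natCast_rpow_neg_le_mul {a b : ℕ → ℝ} (hs : s ≠ 0) (hab : ∀ k ≠ 0, a k ≤ b k)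
    (k : ℕ) : a k * (k : ℝ) ^ (-s) ≤ b k * (k : ℝ) ^ (-s) := by
  rcases eq_or_ne k 0 with rfl | hk
  · simp [zero_rpow (neg_ne_zero.2 hs)]
  · exact mul_le_mul_of_nonneg_right (hab k hk) (by positivity)

end DirichletSeries

/-- `D(s) = ∑_{k≥1} g(k) k^{−s} ≍ ζ(s−β+1)` for `s > β`, with constants depending
only on `β`; in particular the Dirichlet series converges for `s > β`.
(For `s > β` the argument `s − β + 1 > 1` lies in the half-plane of convergence,
where `ζ` is real, so we compare with the real part of `riemannZeta`.) -/
theorem D_asymp_zeta (α β : ℝ) (hα : 0 < α ∧ α < 1) (hβ : β = 1 / α) :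
    ∃ γ₁ > (0:ℝ), ∃ γ₂ > (0:ℝ), ∀ s : ℝ, β < s →
      Summable (fun k : ℕ => (g α k : ℝ) * (k : ℝ) ^ (-s)) ∧
      γ₁ * (riemannZeta ((s - β + 1 : ℝ) : ℂ)).re
          ≤ ∑' k : ℕ, (g α k : ℝ) * (k : ℝ) ^ (-s) ∧
      (∑' k : ℕ, (g α k : ℝ) * (k : ℝ) ^ (-s))
          ≤ γ₂ * (riemannZeta ((s - β + 1 : ℝ) : ℂ)).re := by
  obtain ⟨hα₀, hα₁⟩ := hα
  obtain rfl : β = α⁻¹ := hβ.trans (one_div α)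
  refine ⟨α⁻¹ / 2, by positivity, α⁻¹ * 2 ^ α⁻¹, by positivity, fun s hs => ?_⟩
  have hs₀ : s ≠ 0 := ((inv_pos.2 hα₀).trans hs).ne'
  have hzeta (c : ℝ) : HasSum (fun k : ℕ => c * (k : ℝ) ^ (α⁻¹ - 1) * (k : ℝ) ^ (-s))
      (c * (riemannZeta ((s - α⁻¹ + 1 : ℝ) : ℂ)).re) := by
    simpa only [mul_assoc, sub_add] using
      (hasSum_natCast_rpow_mul_rpow_neg hs₀ (t := α⁻¹ - 1) (by linarith)).mul_left c
  have hlower := mul_natCast_rpow_neg_le_mul hs₀ fun _ => mul_rpow_le_g hα₀ hα₁.le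
  have hupper := mul_natCast_rpow_neg_le_mul hs₀ fun _ => g_le_mul_rpow hα₀ hα₁.le
  have hsum : Summable fun k : ℕ => (g α k : ℝ) * (k : ℝ) ^ (-s) :=
    .of_nonneg_of_le (fun _ => by positivity) hupper (hzeta _).summable
  exact ⟨hsum, hasSum_le hlower (hzeta _) hsum.hasSum, hasSum_le hupper hsum.hasSum (hzeta _)⟩
end
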